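/- arXiv:2502.13296 — 6 statements merged into one kernel-verified Lean document; each statement's English description precedes it below -/
import Mathlib

section
/- The isotropic state ρ^iso₈(0.24) on ℂ⁸⊗ℂ⁸ admits a local hidden variable model under local projective measurements: for all finite index sets X, Y and all finite families of projective measurements {M_{a|x}}_a on ℂ⁸ (x ∈ X) and {N_{b|y}}_b on ℂ⁸ (y ∈ Y), there exist a finite set Λ, weights q_μ ≥ 0 with Σ_μ q_μ = 1, and conditional probability distributions P(a|x,μ) and Q(b|y,μ) (nonnegative, summing to 1 over outcomes), such that Tr[(M_{a|x} ⊗ N_{b|y}) ρ^iso₈(0.24)] = Σ_μ q_μ P(a|x,μ) Q(b|y,μ) for all a, b, x, y. -/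
open Matrix
open scoped Kronecker ComplexOrder

/-- The Schmidt rank of a bipartite vector `ψ : m × n → ℂ`, i.e. the rank of the
matrix `C_ψ` with `(C_ψ)_{ij} = ψ (i, j)`. -/
noncomputable def schmidtRank {m n : Type*} [Fintype m] [Fintype n] (ψ : m × n → ℂ) : ℕ :=
  (Matrix.of fun i j => ψ (i, j)).rank

/-- A matrix `ρ` indexed by `m × n` has Schmidt number at most `r` if it can be written
as `∑_k ψ_k ψ_k†` with each `ψ_k` of Schmidt rank at most `r`. -/
def SchmidtNumberLE {m n : Type*} [Fintype m] [Fintype n]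
    (ρ : Matrix (m × n) (m × n) ℂ) (r : ℕ) : Prop :=
  ∃ (k : ℕ) (ψ : Fin k → m × n → ℂ),
    (∀ i, schmidtRank (ψ i) ≤ r) ∧
    ρ = ∑ i, Matrix.vecMulVec (ψ i) (star (ψ i))

/-- The Schmidt number: the least `r` such that `SchmidtNumberLE ρ r`. -/
noncomputable def schmidtNumber {m n : Type*} [Fintype m] [Fintype n]
    (ρ : Matrix (m × n) (m × n) ℂ) : ℕ :=
  sInf {r | SchmidtNumberLE ρ r}

/-- A density matrix: positive semidefinite with unit trace. -/
def IsDensityMatrix {n : Type*} [Fintype n] (ρ : Matrix n n ℂ) : Prop :=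
  ρ.PosSemidef ∧ ρ.trace = 1

/-- An effect: a Hermitian matrix `M` with `0 ≤ M ≤ I`. -/
def IsEffect {n : Type*} [Fintype n] [DecidableEq n] (M : Matrix n n ℂ) : Prop :=
  M.PosSemidef ∧ (1 - M).PosSemidef

/-- The maximally entangled unit vector `|Φ⁺_d⟩ = (1/√d) ∑ᵢ e_{(i,i)}`. -/
noncomputable def maxEnt (d : ℕ) : Fin d × Fin d → ℂ :=
  fun p => if p.1 = p.2 then ((1 / Real.sqrt d : ℝ) : ℂ) else 0

/-- The projector `P_d = |Φ⁺_d⟩⟨Φ⁺_d|`. -/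
noncomputable def projME (d : ℕ) : Matrix (Fin d × Fin d) (Fin d × Fin d) ℂ :=
  Matrix.vecMulVec (maxEnt d) (star (maxEnt d))

/-- The isotropic state `ρ^iso_d(p) = p P_d + (1−p) I/d²`. -/
noncomputable def isoState (d : ℕ) (p : ℝ) : Matrix (Fin d × Fin d) (Fin d × Fin d) ℂ :=
  (p : ℂ) • projME d + (((1 - p) / (d ^ 2 : ℝ) : ℝ) : ℂ) • 1

/-- `|φ₂⁺⟩ = (1/√2)(e_{(0,0)} + e_{(1,1)}) ∈ ℂ⁸⊗ℂ⁸`. -/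
noncomputable def phi2 : Fin 8 × Fin 8 → ℂ :=
  fun q => if q = (0, 0) ∨ q = (1, 1) then ((1 / Real.sqrt 2 : ℝ) : ℂ) else 0

/-- `ρ̃(λ) = λ ρ^iso₈(0.24) + (1−λ)|φ₂⁺⟩⟨φ₂⁺|`. -/
noncomputable def rhoTilde (l : ℝ) : Matrix (Fin 8 × Fin 8) (Fin 8 × Fin 8) ℂ :=
  (l : ℂ) • isoState 8 0.24 + ((1 - l : ℝ) : ℂ) • Matrix.vecMulVec phi2 (star phi2)

/-- A projective measurement: a finite family of orthogonal projections, mutually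
orthogonal, summing to the identity. -/
def IsProjMeasurement {n : Type*} [Fintype n] [DecidableEq n] {A : Type*} [Fintype A]
    (M : A → Matrix n n ℂ) : Prop :=
  (∀ a, (M a)ᴴ = M a) ∧ (∀ a, M a * M a = M a) ∧
    (∀ a a', a ≠ a' → M a * M a' = 0) ∧ ∑ a, M a = 1

/-!
The hidden variable is a complex Gaussian vector `z`, whose law is unitarily invariant, and Bob
holds the state `z z†`. Alice, measuring in an orthonormal basis that refines her projective
measurement, answers with the basis vector that overlaps most with the conjugate of `z`. The
overlaps are independent exponential variables, so the mean of the largest one is governed by the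
harmonic number `H_d`; this determines the average of `z z†` conditioned on her answer, which by
symmetry is a mixture of the transposed projection and the identity. It is exactly the state to
which the isotropic state of visibility `(H_d - 1) / (d - 1)` is steered, and smaller visibilities
are reached by adding noise to Alice's answers. For `d = 8` the threshold is `481 / 1960 > 0.24`.

Since there are finitely many settings, only the strategy assigning an outcome to each of them
matters, and averaging `z z†` over each strategy makes the hidden variable discrete.
-/

open MeasureTheory ProbabilityTheory

section PositiveSemidefinite

variable {n : Type*} [Fintype n] {K σ : Matrix n n ℂ}

theorem trace_mul_nonneg_of_posSemidef (hK : K.PosSemidef) (hσ : σ.PosSemidef) :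
    0 ≤ (K * σ).trace := by
  obtain ⟨k, v, rfl⟩ := posSemidef_iff_eq_sum_vecMulVec.mp hσ
  rw [Matrix.mul_sum, trace_sum]
  refine Finset.sum_nonneg fun i _ => ?_
  rw [mul_vecMulVec, trace_vecMulVec, dotProduct_comm]
  exact hK.dotProduct_mulVec_nonneg (v i)

theorem ofReal_re_trace_mul_of_posSemidef (hK : K.PosSemidef) (hσ : σ.PosSemidef) :
    ((K * σ).trace.re : ℂ) = (K * σ).trace :=
  (Complex.eq_re_of_ofReal_le (trace_mul_nonneg_of_posSemidef hK hσ)).symm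

theorem isDensityMatrix_maximallyMixed (n : Type*) [Fintype n] [DecidableEq n] [Nonempty n] :
    IsDensityMatrix ((Fintype.card n : ℝ)⁻¹ • (1 : Matrix n n ℂ)) := by
  refine ⟨PosSemidef.one.smul (by positivity), ?_⟩
  simp [trace_smul]

theorem exists_isDensityMatrix_eq_trace_smul [Nonempty n] (hσ : σ.PosSemidef) :
    ∃ ρ, IsDensityMatrix ρ ∧ σ = σ.trace.re • ρ := by
  classical
  by_cases h : σ = 0
  · exact ⟨_, isDensityMatrix_maximallyMixed n, by simp [h]⟩
  have trace_real : (σ.trace.re : ℂ) = σ.trace := by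
    simpa using ofReal_re_trace_mul_of_posSemidef PosSemidef.one hσ
  have trace_ne : σ.trace.re ≠ 0 := fun h0 => h <| hσ.trace_eq_zero_iff.mp <| by
    rw [← trace_real, h0, Complex.ofReal_zero]
  refine ⟨σ.trace.re⁻¹ • σ, ⟨hσ.smul (inv_nonneg.mpr ?_), ?_⟩, (smul_inv_smul₀ trace_ne σ).symm⟩
  · exact (Complex.nonneg_iff.mp hσ.trace_nonneg).1
  · rw [trace_smul, ← trace_real, Complex.ofReal_re, Complex.real_smul, Complex.ofReal_inv,
      inv_mul_cancel₀ (Complex.ofReal_ne_zero.mpr trace_ne)]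

end PositiveSemidefinite

section Measurements

variable {n A : Type*} [Fintype n] [DecidableEq n] [Fintype A]

/-- A positive operator-valued measure with outcomes in `A`: positive semidefinite matrices
summing to the identity. -/
structure IsPOVM (N : A → Matrix n n ℂ) : Prop where
  posSemidef : ∀ a, (N a).PosSemidef
  sum_eq_one : ∑ a, N a = 1

theorem IsProjMeasurement.isPOVM {M : A → Matrix n n ℂ} (hM : IsProjMeasurement M) : IsPOVM M where
  posSemidef a := by
    have hMM := posSemidef_conjTranspose_mul_self (M a)
    rwa [hM.1 a, hM.2.1 a] at hMM
  sum_eq_one := hM.2.2.2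

theorem IsProjMeasurement.transpose {M : A → Matrix n n ℂ} (hM : IsProjMeasurement M) :
    IsProjMeasurement fun a => (M a)ᵀ := by
  obtain ⟨hermitian, idem, orth, sum_one⟩ := hM
  refine ⟨fun a => ?_, fun a => ?_, fun a b hab => ?_, ?_⟩
  · exact IsHermitian.transpose (hermitian a)
  · rw [← transpose_mul, idem]
  · rw [← transpose_mul, orth b a hab.symm, transpose_zero]
  · rw [← transpose_sum, sum_one, transpose_one]

theorem IsPOVM.re_trace_mul_mem_stdSimplex {N : A → Matrix n n ℂ} (hN : IsPOVM N)
    {ρ : Matrix n n ℂ} (hρ : IsDensityMatrix ρ) :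
    (fun a => (N a * ρ).trace.re) ∈ stdSimplex ℝ A := by
  refine ⟨fun a => ?_, ?_⟩
  · exact (Complex.nonneg_iff.mp (trace_mul_nonneg_of_posSemidef (hN.posSemidef a) hρ.1)).1
  · rw [← Complex.re_sum, ← trace_sum, ← Finset.sum_mul, hN.sum_eq_one, Matrix.one_mul, hρ.2,
      Complex.one_re]

end Measurements

section LocalModels

variable {X Y A B n : Type*} [Fintype A] [Fintype B]

/-- The correlations `C a b x y` arise from a local hidden variable model with finitely many
hidden states: `q` is their distribution, `P` and `Q` are the response functions. -/
def IsLocalCorrelation (C : A → B → X → Y → ℂ) : Prop :=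
  ∃ (nΛ : ℕ) (q : Fin nΛ → ℝ) (P : A → X → Fin nΛ → ℝ) (Q : B → Y → Fin nΛ → ℝ),
    (∀ μ, 0 ≤ q μ) ∧ (∑ μ, q μ = 1) ∧
    (∀ a x μ, 0 ≤ P a x μ) ∧ (∀ x μ, ∑ a, P a x μ = 1) ∧
    (∀ b y μ, 0 ≤ Q b y μ) ∧ (∀ y μ, ∑ b, Q b y μ = 1) ∧
    ∀ a b x y, C a b x y = ((∑ μ, q μ * P a x μ * Q b y μ : ℝ) : ℂ)

/-- The assemblage `τ` with reduced state `ρ` has a local hidden state model: the hidden states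
`σ μ`, not normalized, average to `ρ`, and `τ x a` averages them with the weights `P x μ a`. -/
def HasLHSModel (ρ : Matrix n n ℂ) (τ : X → A → Matrix n n ℂ) : Prop :=
  ∃ (nΛ : ℕ) (P : X → Fin nΛ → A → ℝ) (σ : Fin nΛ → Matrix n n ℂ),
    (∀ x μ, P x μ ∈ stdSimplex ℝ A) ∧ (∀ μ, (σ μ).PosSemidef) ∧ ∑ μ, σ μ = ρ ∧
    ∀ x a, τ x a = ∑ μ, P x μ a • σ μ

variable {ρ : Matrix n n ℂ} {τ : X → A → Matrix n n ℂ}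

theorem hasLHSModel_of_fintype {Λ : Type*} [Fintype Λ] {P : X → Λ → A → ℝ}
    {σ : Λ → Matrix n n ℂ} (hP : ∀ x μ, P x μ ∈ stdSimplex ℝ A) (hσ : ∀ μ, (σ μ).PosSemidef) :
    HasLHSModel (∑ μ, σ μ) fun x a => ∑ μ, P x μ a • σ μ :=
  let e := (Fintype.equivFin Λ).symm
  ⟨Fintype.card Λ, fun x μ => P x (e μ), fun μ => σ (e μ), fun x μ => hP x (e μ),
    fun μ => hσ (e μ), e.sum_comp σ, fun x a => (e.sum_comp fun μ => P x μ a • σ μ).symm⟩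

theorem HasLHSModel.smul (h : HasLHSModel ρ τ) {c : ℝ} (hc : 0 ≤ c) :
    HasLHSModel (c • ρ) fun x a => c • τ x a := by
  obtain ⟨nΛ, P, σ, hP, hσ, sum_σ, hτ⟩ := h
  refine ⟨nΛ, P, fun μ => c • σ μ, hP, fun μ => (hσ μ).smul hc, ?_, fun x a => ?_⟩
  · rw [← Finset.smul_sum, sum_σ]
  · simp only [hτ, Finset.smul_sum, smul_comm c]

theorem HasLHSModel.add_noise (h : HasLHSModel ρ τ) {r : X → A → ℝ}
    (hr : ∀ x, r x ∈ stdSimplex ℝ A) {t : ℝ} (ht : t ∈ Set.Icc 0 1) :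
    HasLHSModel ρ fun x a => t • τ x a + ((1 - t) * r x a) • ρ := by
  obtain ⟨nΛ, P, σ, hP, hσ, sum_σ, hτ⟩ := h
  refine ⟨nΛ, fun x μ => t • P x μ + (1 - t) • r x, σ, fun x μ => ?_, hσ, sum_σ, fun x a => ?_⟩
  · exact convex_stdSimplex ℝ A (hP x μ) (hr x) ht.1 (sub_nonneg.mpr ht.2) (add_sub_cancel t 1)
  · simp only [hτ, ← sum_σ, Finset.smul_sum, ← Finset.sum_add_distrib, Pi.add_apply, Pi.smul_apply,
      smul_eq_mul, add_smul, mul_smul]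

theorem HasLHSModel.isLocalCorrelation [Fintype n] [DecidableEq n] (h : HasLHSModel ρ τ)
    (hρ : ρ.trace = 1) {N : Y → B → Matrix n n ℂ} (hN : ∀ y, IsPOVM (N y)) :
    IsLocalCorrelation fun a b x y => (N y b * τ x a).trace := by
  obtain ⟨nΛ, P, σ, hP, hσ, sum_σ, hτ⟩ := h
  have : Nonempty n := not_isEmpty_iff.mp fun _ => by simp [Matrix.trace] at hρ
  choose ω hω σ_eq using fun μ => exists_isDensityMatrix_eq_trace_smul (hσ μ)
  have hQ y μ := (hN y).re_trace_mul_mem_stdSimplex (hω μ)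
  refine ⟨nΛ, fun μ => (σ μ).trace.re, fun a x μ => P x μ a, fun b y μ => (N y b * ω μ).trace.re,
    fun μ => (Complex.nonneg_iff.mp (hσ μ).trace_nonneg).1, ?_, fun a x μ => (hP x μ).1 a,
    fun x μ => (hP x μ).2, fun b y μ => (hQ y μ).1 b, fun y μ => (hQ y μ).2, fun a b x y => ?_⟩
  · rw [← Complex.re_sum, ← trace_sum, sum_σ, hρ, Complex.one_re]
  · beta_reduce
    rw [hτ, Matrix.mul_sum, trace_sum, Complex.ofReal_sum]
    refine Finset.sum_congr rfl fun μ _ => ?_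
    conv_lhs =>
      rw [σ_eq μ, mul_smul_comm, mul_smul_comm, trace_smul, trace_smul,
        ← ofReal_re_trace_mul_of_posSemidef ((hN y).posSemidef b) (hω μ).1]
    simp only [Complex.real_smul]
    push_cast
    ring

end LocalModels

section GaussianTail

section Density

variable (E : Type*) [NormedAddCommGroup E] [InnerProductSpace ℝ E] [FiniteDimensional ℝ E]
  [MeasurableSpace E] [BorelSpace E]

theorem integrable_exp_neg_norm_sq_div_two : Integrable fun x : E => Real.exp (-‖x‖ ^ 2 / 2) := by
  refine Integrable.of_integral_ne_zero ?_
  have h := GaussianFourier.integral_rexp_neg_mul_sq_norm (V := E) (b := 1 / 2) (by norm_num)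
  simp only [show ∀ x : E, -‖x‖ ^ 2 / 2 = -(1 / 2) * ‖x‖ ^ 2 from fun x => by ring, h]
  positivity

theorem stdGaussian_eq_withDensity :
    stdGaussian E = volume.withDensity fun x : E => ENNReal.ofReal
      ((2 * Real.pi) ^ (-(Module.finrank ℝ E / 2 : ℝ)) * Real.exp (-‖x‖ ^ 2 / 2)) := by
  set c : ℝ := (2 * Real.pi) ^ (-(Module.finrank ℝ E / 2 : ℝ)) with c_def
  have c_pos : 0 < c := by positivity
  have : IsFiniteMeasure (volume.withDensity fun x : E => ENNReal.ofReal
      (c * Real.exp (-‖x‖ ^ 2 / 2))) :=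
    isFiniteMeasure_withDensity_ofReal ((integrable_exp_neg_norm_sq_div_two E).const_mul c).2
  refine Measure.ext_of_charFun (funext fun t => ?_)
  have fourier : ∫ x : E, Complex.exp (-(1 / 2) * ‖x‖ ^ 2 + Complex.I * inner ℝ t x) =
      (c : ℂ)⁻¹ * Complex.exp (-‖t‖ ^ 2 / 2) := by
    have hc : (c : ℂ)⁻¹ = (Real.pi / (1 / 2)) ^ (Module.finrank ℝ E / 2 : ℂ) := by
      rw [c_def, Real.rpow_neg (by positivity), Complex.ofReal_inv, inv_inv,
        Complex.ofReal_cpow (by positivity)]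
      push_cast
      congr 1
      ring
    rw [GaussianFourier.integral_cexp_neg_mul_sq_norm_add (by norm_num) Complex.I t, hc]
    congr 2
    rw [Complex.I_sq]
    ring
  rw [charFun_stdGaussian, charFun_apply, integral_withDensity_eq_integral_toReal_smul (by fun_prop)
    (.of_forall fun _ => ENNReal.ofReal_lt_top)]
  calc Complex.exp (-‖t‖ ^ 2 / 2)
      = c * ∫ x : E, Complex.exp (-(1 / 2) * ‖x‖ ^ 2 + Complex.I * inner ℝ t x) := by
        rw [fourier, mul_inv_cancel_left₀ (Complex.ofReal_ne_zero.mpr c_pos.ne')]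
    _ = ∫ x : E, (ENNReal.ofReal (c * Real.exp (-‖x‖ ^ 2 / 2))).toReal •
          Complex.exp (inner ℝ x t * Complex.I) := by
        rw [← integral_const_mul]
        congr with x
        rw [ENNReal.toReal_ofReal (by positivity), Complex.real_smul, real_inner_comm,
          Complex.exp_add]
        push_cast
        rw [mul_assoc]
        congr 3 <;> ring

end Density

theorem integral_Ioi_mul_exp_neg_sq_div_two {a : ℝ} (ha : 0 ≤ a) :
    ∫ r in Set.Ioi a, r * Real.exp (-r ^ 2 / 2) = Real.exp (-a ^ 2 / 2) := by
  have deriv (r : ℝ) :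
      HasDerivAt (fun r => -Real.exp (-r ^ 2 / 2)) (r * Real.exp (-r ^ 2 / 2)) r := by
    have h : HasDerivAt (fun r : ℝ => -r ^ 2 / 2) (-r) r := by
      simpa [neg_div] using (hasDerivAt_pow 2 r).neg.div_const 2
    simpa [mul_comm] using! h.exp.neg
  have tendsto : Filter.Tendsto (fun r : ℝ => -Real.exp (-r ^ 2 / 2)) Filter.atTop (nhds 0) := by
    rw [← neg_zero]
    refine (Real.tendsto_exp_atBot.comp ?_).neg
    simp only [neg_div]
    exact Filter.tendsto_neg_atTop_atBot.comp
      ((Filter.tendsto_pow_atTop two_ne_zero).atTop_div_const two_pos)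
  rw [integral_Ioi_of_hasDerivAt_of_nonneg' (fun r _ => deriv r) (fun r hr => ?_) tendsto]
  · simp
  · have : 0 ≤ r := ha.trans (le_of_lt hr)
    positivity

theorem stdGaussian_complex_real_lt_norm {a : ℝ} (ha : 0 ≤ a) :
    (stdGaussian ℂ).real {z | a < ‖z‖} = Real.exp (-a ^ 2 / 2) := by
  have hm : MeasurableSet {z : ℂ | a < ‖z‖} := measurableSet_lt (by fun_prop) (by fun_prop)
  have radial : ∫ z : ℂ in {z | a < ‖z‖}, Real.exp (-‖z‖ ^ 2 / 2) =
      2 * Real.pi * Real.exp (-a ^ 2 / 2) := by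
    have polar := integral_fun_norm_addHaar (volume : Measure ℂ)
      ((Set.Ioi a).indicator fun r => Real.exp (-r ^ 2 / 2))
    have radius_integral : ∫ r in Set.Ioi (0 : ℝ), r ^ (2 - 1) •
        (Set.Ioi a).indicator (fun r => Real.exp (-r ^ 2 / 2)) r = Real.exp (-a ^ 2 / 2) := by
      have mul_indicator (r : ℝ) : r ^ (2 - 1) • (Set.Ioi a).indicator
          (fun r => Real.exp (-r ^ 2 / 2)) r =
          (Set.Ioi a).indicator (fun r => r * Real.exp (-r ^ 2 / 2)) r := by simp [Set.indicator]
      simp only [mul_indicator]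
      rw [setIntegral_indicator measurableSet_Ioi,
        Set.inter_eq_right.mpr (Set.Ioi_subset_Ioi ha), integral_Ioi_mul_exp_neg_sq_div_two ha]
    rw [Complex.finrank_real_complex, radius_integral] at polar
    rw [← integral_indicator hm]
    calc ∫ z : ℂ, {z : ℂ | a < ‖z‖}.indicator (fun z => Real.exp (-‖z‖ ^ 2 / 2)) z
        = 2 • (volume : Measure ℂ).real (Metric.ball 0 1) • Real.exp (-a ^ 2 / 2) := polar
      _ = 2 * Real.pi * Real.exp (-a ^ 2 / 2) := by simp [Measure.real, mul_assoc]
  rw [stdGaussian_eq_withDensity, measureReal_def, withDensity_apply _ hm,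
    ← integral_eq_lintegral_of_nonneg_ae (.of_forall fun _ => by positivity) (by fun_prop),
    integral_const_mul, radial, Complex.finrank_real_complex]
  norm_num [Real.rpow_neg_one]
  field_simp

theorem stdGaussian_complex_real_lt_norm_sq {t : ℝ} (ht : 0 ≤ t) :
    (stdGaussian ℂ).real {z | t < ‖z‖ ^ 2} = Real.exp (-t / 2) := by
  have lt_norm_sq_iff (z : ℂ) : t < ‖z‖ ^ 2 ↔ √t < ‖z‖ := by
    rw [← Real.sqrt_lt_sqrt_iff ht, Real.sqrt_sq (norm_nonneg z)]
  simp only [lt_norm_sq_iff, stdGaussian_complex_real_lt_norm (Real.sqrt_nonneg t), Real.sq_sqrt ht]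

end GaussianTail

section ComplexGaussian

/-- The law of a vector of independent standard complex Gaussians, the real and imaginary parts
of each entry having variance `1`, so that `‖z i‖ ^ 2` has mean `2`. -/
noncomputable def complexGaussian (ι : Type*) [Fintype ι] : Measure (ι → ℂ) :=
  Measure.pi fun _ => stdGaussian ℂ

variable {ι : Type*} [Fintype ι]

instance : IsProbabilityMeasure (complexGaussian ι) := by
  unfold complexGaussian
  infer_instance

theorem complexGaussian_map_toLp :
    (complexGaussian ι).map (WithLp.toLp 2) = stdGaussian (EuclideanSpace ℂ ι) := by
  refine Measure.ext_of_charFun (funext fun t => ?_)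
  simp_rw [complexGaussian, charFun_stdGaussian, charFun_pi, charFun_stdGaussian, ← Complex.exp_sum,
    ← Complex.ofReal_pow, EuclideanSpace.norm_sq_eq]
  push_cast
  rw [← Finset.sum_neg_distrib, Finset.sum_div]

theorem stdGaussian_map_ofLp :
    (stdGaussian (EuclideanSpace ℂ ι)).map WithLp.ofLp = complexGaussian ι := by
  rw [← complexGaussian_map_toLp, Measure.map_map (by fun_prop) (by fun_prop)]
  exact Measure.map_id

section Unitary

variable [DecidableEq ι] (U : unitaryGroup ι ℂ)

theorem measurePreserving_unitary_mulVec :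
    MeasurePreserving (fun z => (U : Matrix ι ι ℂ) *ᵥ z) (complexGaussian ι)
      (complexGaussian ι) := by
  let e := Unitary.linearIsometryEquiv
    ⟨_, Unitary.map_mem (toEuclideanCLM (n := ι) (𝕜 := ℂ)) U.2⟩
  let e' : EuclideanSpace ℂ ι ≃ₗᵢ[ℝ] EuclideanSpace ℂ ι :=
    ⟨e.toLinearEquiv.restrictScalars ℝ, e.norm_map⟩
  refine ⟨by fun_prop, ?_⟩
  conv_rhs => rw [← stdGaussian_map_ofLp, ← stdGaussian_map e']
  rw [← stdGaussian_map_ofLp, Measure.map_map (by fun_prop) (by fun_prop),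
    Measure.map_map (by fun_prop) (by fun_prop)]
  rfl

theorem integral_unitary_mulVec {F : Type*} [NormedAddCommGroup F] [NormedSpace ℝ F]
    (f : (ι → ℂ) → F) :
    ∫ z, f ((U : Matrix ι ι ℂ) *ᵥ z) ∂complexGaussian ι = ∫ z, f z ∂complexGaussian ι := by
  have hU : Function.Injective (U : Matrix ι ι ℂ).mulVec :=
    mulVec_injective_of_isUnit (Unitary.toUnits U).isUnit
  exact (measurePreserving_unitary_mulVec U).integral_comp
    ((by fun_prop : Continuous _).measurableEmbedding hU) f

end Unitary

theorem integral_comp_perm_complexGaussian {F : Type*} [NormedAddCommGroup F] [NormedSpace ℝ F]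
    (e : Equiv.Perm ι) (f : (ι → ℂ) → F) :
    ∫ z, f (z ∘ e) ∂complexGaussian ι = ∫ z, f z ∂complexGaussian ι := by
  classical
  have mem_unitary : e.permMatrix ℂ ∈ unitaryGroup ι ℂ := by
    rw [mem_unitaryGroup_iff, star_eq_conjTranspose, conjTranspose_permMatrix, ← permMatrix_mul,
      inv_mul_cancel, permMatrix_one]
  simpa only [permMatrix_mulVec] using integral_unitary_mulVec ⟨_, mem_unitary⟩ f

theorem measurePreserving_eval_complexGaussian (j : ι) :
    MeasurePreserving (Function.eval j) (complexGaussian ι) (stdGaussian ℂ) :=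
  measurePreserving_eval (fun _ : ι => stdGaussian ℂ) j

theorem memLp_eval_complexGaussian (j : ι) : MemLp (fun z => z j) 2 (complexGaussian ι) :=
  (IsGaussian.memLp_id (stdGaussian ℂ) 2 (by simp)).comp_measurePreserving
    (measurePreserving_eval_complexGaussian j)

theorem integrable_norm_sq_eval_complexGaussian (j : ι) :
    Integrable (fun z => ‖z j‖ ^ 2) (complexGaussian ι) :=
  (memLp_eval_complexGaussian j).integrable_norm_pow (by norm_num)

theorem integral_norm_sq_eval_complexGaussian (j : ι) :
    ∫ z, ‖z j‖ ^ 2 ∂complexGaussian ι = 2 := by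
  have tail : ∀ t ∈ Set.Ioi (0 : ℝ),
      (complexGaussian ι).real {z | t < ‖z j‖ ^ 2} = Real.exp (-(1 / 2) * t) := fun t ht => by
    have hm : MeasurableSet {z : ℂ | t < ‖z‖ ^ 2} := measurableSet_lt (by fun_prop) (by fun_prop)
    have h := (measurePreserving_eval_complexGaussian j).measureReal_preimage hm.nullMeasurableSet
    rw [stdGaussian_complex_real_lt_norm_sq (le_of_lt ht)] at h
    rw [show -(1 / 2) * t = -t / 2 by ring, ← h]
    rfl
  rw [(integrable_norm_sq_eval_complexGaussian j).integral_eq_integral_meas_lt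
    (.of_forall fun _ => by positivity), setIntegral_congr_fun measurableSet_Ioi tail,
    integral_exp_mul_Ioi (by norm_num)]
  norm_num

section Maximum

theorem hasDerivAt_one_sub_exp_neg_half_pow (k : ℕ) (t : ℝ) :
    HasDerivAt (fun t => 2 / (k + 1) * (1 - Real.exp (-t / 2)) ^ (k + 1))
      (Real.exp (-t / 2) * (1 - Real.exp (-t / 2)) ^ k) t := by
  have inner : HasDerivAt (fun t => 1 - Real.exp (-t / 2)) (Real.exp (-t / 2) / 2) t := by
    have h : HasDerivAt (fun t : ℝ => -t / 2) (-1 / 2) t := (hasDerivAt_neg t).div_const 2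
    convert! h.exp.const_sub 1 using 1
    ring
  convert! (inner.pow (k + 1)).const_mul (2 / (k + 1 : ℝ)) using 1
  push_cast
  field_simp

theorem tendsto_one_sub_exp_neg_half_pow (k : ℕ) :
    Filter.Tendsto (fun t => 2 / (k + 1) * (1 - Real.exp (-t / 2)) ^ (k + 1)) Filter.atTop
      (nhds (2 / (k + 1))) := by
  have exp_tendsto : Filter.Tendsto (fun t : ℝ => Real.exp (-t / 2)) Filter.atTop (nhds 0) :=
    Real.tendsto_exp_atBot.comp (Filter.tendsto_neg_atTop_atBot.atBot_div_const two_pos)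
  simpa using ((exp_tendsto.const_sub 1).pow (k + 1)).const_mul (2 / (k + 1 : ℝ))

theorem exp_neg_half_mul_one_sub_pow_nonneg (k : ℕ) {t : ℝ} (ht : 0 ≤ t) :
    0 ≤ Real.exp (-t / 2) * (1 - Real.exp (-t / 2)) ^ k := by
  have : 0 ≤ 1 - Real.exp (-t / 2) := sub_nonneg.mpr (Real.exp_le_one_iff.mpr (by linarith))
  positivity

theorem integrableOn_exp_neg_half_mul_one_sub_pow (k : ℕ) :
    IntegrableOn (fun t => Real.exp (-t / 2) * (1 - Real.exp (-t / 2)) ^ k) (Set.Ioi 0) :=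
  integrableOn_Ioi_deriv_of_nonneg' (fun t _ => hasDerivAt_one_sub_exp_neg_half_pow k t)
    (fun _ ht => exp_neg_half_mul_one_sub_pow_nonneg k (le_of_lt ht))
    (tendsto_one_sub_exp_neg_half_pow k)

theorem integral_exp_neg_half_mul_one_sub_pow (k : ℕ) :
    ∫ t in Set.Ioi (0 : ℝ), Real.exp (-t / 2) * (1 - Real.exp (-t / 2)) ^ k = 2 / (k + 1) := by
  rw [integral_Ioi_of_hasDerivAt_of_nonneg'
    (fun t _ => hasDerivAt_one_sub_exp_neg_half_pow k t)
    (fun _ ht => exp_neg_half_mul_one_sub_pow_nonneg k (le_of_lt ht))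
    (tendsto_one_sub_exp_neg_half_pow k)]
  simp

variable [Nonempty ι]

theorem complexGaussian_real_lt_iSup_norm_sq {t : ℝ} (ht : 0 ≤ t) :
    (complexGaussian ι).real {z | t < ⨆ k, ‖z k‖ ^ 2} =
      1 - (1 - Real.exp (-t / 2)) ^ Fintype.card ι := by
  have hm : MeasurableSet {z : ℂ | t < ‖z‖ ^ 2} := measurableSet_lt (by fun_prop) (by fun_prop)
  have setOf_eq : {z : ι → ℂ | t < ⨆ k, ‖z k‖ ^ 2} =
      (Set.univ.pi fun _ => {z : ℂ | t < ‖z‖ ^ 2}ᶜ)ᶜ := by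
    ext z
    simp [lt_ciSup_iff (Set.finite_range _).bddAbove]
  rw [setOf_eq, probReal_compl_eq_one_sub (MeasurableSet.univ_pi fun _ => hm.compl),
    complexGaussian, measureReal_def, Measure.pi_pi, ENNReal.toReal_prod]
  simp only [← measureReal_def, probReal_compl_eq_one_sub hm,
    stdGaussian_complex_real_lt_norm_sq ht, Finset.prod_const, Finset.card_univ]

theorem integrable_iSup_norm_sq_complexGaussian :
    Integrable (fun z => ⨆ k, ‖z k‖ ^ 2) (complexGaussian ι) := by
  refine (integrable_finsetSum Finset.univ fun k _ =>
    integrable_norm_sq_eval_complexGaussian k).mono' ?_ (.of_forall fun z => ?_)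
  · exact (Measurable.iSup fun k => by fun_prop).aestronglyMeasurable
  · rw [Real.norm_of_nonneg (Real.iSup_nonneg fun k => by positivity)]
    exact ciSup_le fun k =>
      Finset.single_le_sum (f := fun k => ‖z k‖ ^ 2) (fun k _ => by positivity) (Finset.mem_univ k)

theorem integral_iSup_norm_sq_complexGaussian :
    ∫ z, ⨆ k, ‖z k‖ ^ 2 ∂complexGaussian ι = 2 * harmonic (Fintype.card ι) := by
  have tail : ∀ t ∈ Set.Ioi (0 : ℝ), (complexGaussian ι).real {z | t < ⨆ k, ‖z k‖ ^ 2} =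
      ∑ k ∈ Finset.range (Fintype.card ι), Real.exp (-t / 2) * (1 - Real.exp (-t / 2)) ^ k :=
    fun t ht => by
      rw [complexGaussian_real_lt_iSup_norm_sq (le_of_lt ht), ← Finset.mul_sum,
        ← mul_neg_geom_sum, sub_sub_cancel]
  rw [integrable_iSup_norm_sq_complexGaussian.integral_eq_integral_meas_lt
      (.of_forall fun z => Real.iSup_nonneg fun k => by positivity),
    setIntegral_congr_fun measurableSet_Ioi tail,
    integral_finsetSum _ fun k _ => integrableOn_exp_neg_half_mul_one_sub_pow k]
  simp only [integral_exp_neg_half_mul_one_sub_pow, harmonic, Rat.cast_sum, Finset.mul_sum]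
  push_cast
  simp only [div_eq_mul_inv]

end Maximum

end ComplexGaussian

section ArgmaxWeight

variable {ι : Type*} [Fintype ι]

/-- The probability of answering `i` for a player who picks uniformly at random one of the
indices at which `s` is largest. -/
noncomputable def argmaxWeight (s : ι → ℝ) (i : ι) : ℝ :=
  (if s i = ⨆ k, s k then 1 else 0) / ∑ j, if s j = ⨆ k, s k then 1 else 0

theorem argmaxWeight_mem_stdSimplex [Nonempty ι] (s : ι → ℝ) :
    argmaxWeight s ∈ stdSimplex ℝ ι := by
  have card_ne_zero : (∑ j, if s j = ⨆ k, s k then (1 : ℝ) else 0) ≠ 0 := by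
    obtain ⟨i, hi⟩ := exists_eq_ciSup_of_finite (f := s)
    rw [Finset.sum_boole, Nat.cast_ne_zero, Finset.card_ne_zero]
    exact ⟨i, Finset.mem_filter.mpr ⟨Finset.mem_univ i, hi⟩⟩
  refine ⟨fun i => by unfold argmaxWeight; positivity, ?_⟩
  simp only [argmaxWeight, ← Finset.sum_div]
  exact div_self card_ne_zero

theorem argmaxWeight_mul_self (s : ι → ℝ) (i : ι) :
    argmaxWeight s i * s i = argmaxWeight s i * ⨆ k, s k := by
  unfold argmaxWeight
  split_ifs with h
  · rw [h]
  · simp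

theorem argmaxWeight_comp_perm (s : ι → ℝ) (e : Equiv.Perm ι) (i : ι) :
    argmaxWeight (s ∘ e) i = argmaxWeight s (e i) := by
  have iSup_comp : ⨆ k, (s ∘ e) k = ⨆ k, s k := e.iSup_comp (g := s)
  unfold argmaxWeight
  rw [iSup_comp]
  congr 1
  exact Equiv.sum_comp e fun j => if s j = ⨆ k, s k then (1 : ℝ) else 0

theorem measurable_argmaxWeight (i : ι) : Measurable fun s => argmaxWeight s i := by
  have measurable_iSup : Measurable fun s : ι → ℝ => ⨆ k, s k := Measurable.iSup measurable_pi_apply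
  have measurable_isMax (j : ι) :
      Measurable fun s : ι → ℝ => if s j = ⨆ k, s k then (1 : ℝ) else 0 :=
    .ite (measurableSet_eq_fun (measurable_pi_apply j) measurable_iSup) measurable_const
      measurable_const
  exact (measurable_isMax i).div (Finset.measurable_fun_sum _ fun j _ => measurable_isMax j)

end ArgmaxWeight

section ArgmaxGaussian

variable {ι : Type*} [Fintype ι]

/-- The noise parameter `(H_d - 1) / (d - 1)`, where `H_d` is the harmonic number, up to which the
Gaussian model reproduces the isotropic state of local dimension `d`. -/
noncomputable def criticalVisibility (d : ℕ) : ℝ :=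
  (harmonic d - 1) / (d - 1)

theorem criticalVisibility_pos {d : ℕ} (hd : 2 ≤ d) : 0 < criticalVisibility d := by
  have one_lt_harmonic : 1 < harmonic d := by
    induction d, hd using Nat.le_induction with
    | base => norm_num [harmonic, Finset.sum_range_succ]
    | succ n _ ih =>
      rw [harmonic_succ]
      exact lt_add_of_lt_of_pos ih (by positivity)
  have one_lt_d : (1 : ℝ) < d := by exact_mod_cast hd
  exact div_pos (sub_pos.mpr (by exact_mod_cast one_lt_harmonic)) (sub_pos.mpr one_lt_d)

theorem measurable_argmaxWeight_norm_sq (i : ι) :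
    Measurable fun z : ι → ℂ => argmaxWeight (fun k => ‖z k‖ ^ 2) i :=
  (measurable_argmaxWeight i).comp
    (measurable_pi_lambda _ fun k => (measurable_pi_apply k).norm.pow_const 2)

theorem integrable_argmaxWeight_mul_norm_sq [Nonempty ι] (i j : ι) :
    Integrable (fun z => argmaxWeight (fun k => ‖z k‖ ^ 2) i * ‖z j‖ ^ 2) (complexGaussian ι) := by
  refine (integrable_norm_sq_eval_complexGaussian j).bdd_mul (c := 1) ?_ (.of_forall fun z => ?_)
  · exact (measurable_argmaxWeight_norm_sq i).aestronglyMeasurable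
  · obtain ⟨nonneg, le_one⟩ :=
      mem_Icc_of_mem_stdSimplex (argmaxWeight_mem_stdSimplex fun k => ‖z k‖ ^ 2) i
    rwa [Real.norm_of_nonneg nonneg]

theorem integral_argmaxWeight_mul_norm_sq_perm (e : Equiv.Perm ι) (i j : ι) :
    ∫ z, argmaxWeight (fun k => ‖z k‖ ^ 2) (e i) * ‖z (e j)‖ ^ 2 ∂complexGaussian ι =
      ∫ z, argmaxWeight (fun k => ‖z k‖ ^ 2) i * ‖z j‖ ^ 2 ∂complexGaussian ι := by
  rw [← integral_comp_perm_complexGaussian e fun z =>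
    argmaxWeight (fun k => ‖z k‖ ^ 2) i * ‖z j‖ ^ 2]
  congr with z
  rw [← argmaxWeight_comp_perm]
  rfl

theorem sum_integral_argmaxWeight_mul_norm_sq [Nonempty ι] (j : ι) :
    ∑ i, ∫ z, argmaxWeight (fun k => ‖z k‖ ^ 2) i * ‖z j‖ ^ 2 ∂complexGaussian ι = 2 := by
  rw [← integral_finsetSum _ fun i _ => integrable_argmaxWeight_mul_norm_sq i j,
    ← integral_norm_sq_eval_complexGaussian j]
  congr with z
  rw [← Finset.sum_mul, (argmaxWeight_mem_stdSimplex _).2, one_mul]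

theorem integral_argmaxWeight_mul_norm_sq_self [Nonempty ι] (i : ι) :
    ∫ z, argmaxWeight (fun k => ‖z k‖ ^ 2) i * ‖z i‖ ^ 2 ∂complexGaussian ι =
      2 * harmonic (Fintype.card ι) / Fintype.card ι := by
  classical
  have indep (j : ι) : ∫ z, argmaxWeight (fun k => ‖z k‖ ^ 2) j * ‖z j‖ ^ 2 ∂complexGaussian ι =
      ∫ z, argmaxWeight (fun k => ‖z k‖ ^ 2) i * ‖z i‖ ^ 2 ∂complexGaussian ι := by
    simpa using integral_argmaxWeight_mul_norm_sq_perm (Equiv.swap i j) i i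
  rw [eq_div_iff (by positivity), ← integral_iSup_norm_sq_complexGaussian, mul_comm]
  calc Fintype.card ι * ∫ z, argmaxWeight (fun k => ‖z k‖ ^ 2) i * ‖z i‖ ^ 2 ∂complexGaussian ι
      = ∑ j, ∫ z, argmaxWeight (fun k => ‖z k‖ ^ 2) j * ‖z j‖ ^ 2 ∂complexGaussian ι := by
        simp [indep]
    _ = ∫ z, ∑ j, argmaxWeight (fun k => ‖z k‖ ^ 2) j * ‖z j‖ ^ 2 ∂complexGaussian ι :=
        (integral_finsetSum _ fun j _ => integrable_argmaxWeight_mul_norm_sq j j).symm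
    _ = ∫ z, ⨆ k, ‖z k‖ ^ 2 ∂complexGaussian ι := by
        congr with z
        simp only [argmaxWeight_mul_self fun k => ‖z k‖ ^ 2]
        rw [← Finset.sum_mul, (argmaxWeight_mem_stdSimplex _).2, one_mul]

theorem integral_argmaxWeight_mul_norm_sq_of_ne {i j : ι} (hij : i ≠ j) :
    ∫ z, argmaxWeight (fun k => ‖z k‖ ^ 2) i * ‖z j‖ ^ 2 ∂complexGaussian ι =
      2 * (1 - criticalVisibility (Fintype.card ι)) / Fintype.card ι := by
  classical
  have : Nonempty ι := ⟨i⟩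
  have indep : ∀ k ∈ Finset.univ.erase j,
      ∫ z, argmaxWeight (fun k => ‖z k‖ ^ 2) k * ‖z j‖ ^ 2 ∂complexGaussian ι =
        ∫ z, argmaxWeight (fun k => ‖z k‖ ^ 2) i * ‖z j‖ ^ 2 ∂complexGaussian ι := fun k hk => by
    have h := integral_argmaxWeight_mul_norm_sq_perm (Equiv.swap i k) i j
    rwa [Equiv.swap_apply_left,
      Equiv.swap_apply_of_ne_of_ne hij.symm (Finset.ne_of_mem_erase hk).symm] at h
  have one_lt_card : (1 : ℝ) < Fintype.card ι := by
    exact_mod_cast Fintype.one_lt_card_iff.mpr ⟨i, j, hij⟩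
  have sum_eq := sum_integral_argmaxWeight_mul_norm_sq j
  rw [← Finset.add_sum_erase _ _ (Finset.mem_univ j), Finset.sum_congr rfl indep, Finset.sum_const,
    Finset.card_erase_of_mem (Finset.mem_univ j), Finset.card_univ, nsmul_eq_mul,
    Nat.cast_pred Fintype.card_pos, integral_argmaxWeight_mul_norm_sq_self] at sum_eq
  have : (Fintype.card ι : ℝ) - 1 ≠ 0 := by linarith
  rw [criticalVisibility]
  field_simp at sum_eq ⊢
  linarith

theorem integral_argmaxWeight_mul_norm_sq [Nontrivial ι] [DecidableEq ι] (i j : ι) :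
    ∫ z, argmaxWeight (fun k => ‖z k‖ ^ 2) i * ‖z j‖ ^ 2 ∂complexGaussian ι =
      2 * criticalVisibility (Fintype.card ι) * (if j = i then 1 else 0) +
        2 * (1 - criticalVisibility (Fintype.card ι)) / Fintype.card ι := by
  split_ifs with h
  · have one_lt_card : (1 : ℝ) < Fintype.card ι := by exact_mod_cast Fintype.one_lt_card (α := ι)
    have : (Fintype.card ι : ℝ) - 1 ≠ 0 := by linarith
    rw [h, integral_argmaxWeight_mul_norm_sq_self, criticalVisibility]
    field_simp
    ring
  · rw [integral_argmaxWeight_mul_norm_sq_of_ne (Ne.symm h), mul_zero, zero_add]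

end ArgmaxGaussian

section SecondMoment

variable {ι : Type*} {μ : Measure (ι → ℂ)} {c : (ι → ℂ) → ℝ}

/-- The average of the rank-one matrices `z z†` over `μ`, weighted by `c`: the unnormalized state
held by Bob when he is sent the random vector `z` and the event of probability `c z` occurs. -/
noncomputable def secondMoment (μ : Measure (ι → ℂ)) (c : (ι → ℂ) → ℝ) : Matrix ι ι ℂ :=
  of fun j k => ∫ z, c z • (z j * star (z k)) ∂μ

/-- The integrals defining `secondMoment μ c` converge, so that none of its entries is a junk
value. -/
def HasSecondMoment (μ : Measure (ι → ℂ)) (c : (ι → ℂ) → ℝ) : Prop :=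
  ∀ j k, Integrable (fun z => c z • (z j * star (z k))) μ

theorem hasSecondMoment_of_mem_Icc (hμ : ∀ j, MemLp (fun z => z j) 2 μ) (hc : Measurable c)
    (hc01 : ∀ z, c z ∈ Set.Icc 0 1) : HasSecondMoment μ c := fun j k => by
  refine (MemLp.integrable_mul (hμ j) (hμ k).star).bdd_smul 1 hc.aestronglyMeasurable
    (.of_forall fun z => ?_)
  rw [Real.norm_of_nonneg (hc01 z).1]
  exact (hc01 z).2

theorem secondMoment_sum {κ : Type*} (s : Finset κ) {c : κ → (ι → ℂ) → ℝ}
    (hc : ∀ i ∈ s, HasSecondMoment μ (c i)) :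
    secondMoment μ (fun z => ∑ i ∈ s, c i z) = ∑ i ∈ s, secondMoment μ (c i) := by
  ext j k
  simp only [secondMoment, of_apply, Matrix.sum_apply, Finset.sum_smul]
  exact integral_finsetSum s fun i hi => hc i hi j k

theorem secondMoment_isHermitian (μ : Measure (ι → ℂ)) (c : (ι → ℂ) → ℝ) :
    (secondMoment μ c).IsHermitian := by
  ext j k
  simp only [secondMoment, conjTranspose_apply, of_apply]
  rw [RCLike.star_def, ← integral_conj]
  congr with z
  simp [mul_comm]

theorem mul_secondMoment_mul_conjTranspose_apply [Fintype ι] {m : Type*} (hc : HasSecondMoment μ c)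
    (L : Matrix m ι ℂ) (j k : m) :
    (L * secondMoment μ c * Lᴴ) j k = ∫ z, c z • ((L *ᵥ z) j * star ((L *ᵥ z) k)) ∂μ := by
  have expand (z : ι → ℂ) : c z • ((L *ᵥ z) j * star ((L *ᵥ z) k)) =
      ∑ b, ∑ a, L j a * star (L k b) * c z • (z a * star (z b)) := by
    simp only [mulVec, dotProduct, star_sum, Finset.sum_mul_sum, Finset.smul_sum, star_mul']
    rw [Finset.sum_comm]
    simp only [Complex.real_smul]
    congr! 2
    ring
  have integrable_term (a b : ι) :
      Integrable (fun z => L j a * star (L k b) * c z • (z a * star (z b))) μ :=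
    (hc a b).const_mul _
  simp only [expand, mul_apply, conjTranspose_apply, Finset.sum_mul]
  rw [integral_finsetSum _ fun b _ => integrable_finsetSum _ fun a _ => integrable_term a b]
  refine Finset.sum_congr rfl fun b _ => ?_
  rw [integral_finsetSum _ fun a _ => integrable_term a b]
  refine Finset.sum_congr rfl fun a _ => ?_
  rw [integral_const_mul, secondMoment, of_apply]
  ring

theorem secondMoment_posSemidef [Finite ι] (hc : HasSecondMoment μ c) (c_nonneg : ∀ z, 0 ≤ c z) :
    (secondMoment μ c).PosSemidef := by
  cases nonempty_fintype ι
  refine .of_dotProduct_mulVec_nonneg (secondMoment_isHermitian μ c) fun u => ?_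
  have h := mul_secondMoment_mul_conjTranspose_apply hc (replicateRow Unit (star u)) () ()
  have quadratic_form : star u ⬝ᵥ secondMoment μ c *ᵥ u =
      ∫ z, c z • ((star u ⬝ᵥ z) * star (star u ⬝ᵥ z)) ∂μ := by
    rw [dotProduct_mulVec]
    simpa [mul_apply, vecMul, dotProduct, mulVec] using h
  rw [quadratic_form]
  exact integral_nonneg fun z => smul_nonneg (c_nonneg z) (mul_star_self_nonneg _)

variable [Fintype ι]

theorem hasSecondMoment_argmaxWeight [Nonempty ι] (i : ι) :
    HasSecondMoment (complexGaussian ι) fun z => argmaxWeight (fun k => ‖z k‖ ^ 2) i :=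
  hasSecondMoment_of_mem_Icc memLp_eval_complexGaussian (measurable_argmaxWeight_norm_sq i)
    fun _ => mem_Icc_of_mem_stdSimplex (argmaxWeight_mem_stdSimplex _) i

variable [DecidableEq ι]

theorem secondMoment_comp_unitary (U : unitaryGroup ι ℂ)
    (hc : HasSecondMoment (complexGaussian ι) c) :
    secondMoment (complexGaussian ι) (fun z => c ((U : Matrix ι ι ℂ) *ᵥ z)) =
      (U : Matrix ι ι ℂ)ᴴ * secondMoment (complexGaussian ι) c * (U : Matrix ι ι ℂ) := by
  have hU : (U : Matrix ι ι ℂ)ᴴ * (U : Matrix ι ι ℂ) = 1 := mem_unitaryGroup_iff'.mp U.2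
  ext j k
  have h := mul_secondMoment_mul_conjTranspose_apply hc (U : Matrix ι ι ℂ)ᴴ j k
  rw [conjTranspose_conjTranspose] at h
  rw [h, ← integral_unitary_mulVec U]
  simp only [mulVec_mulVec, hU, one_mulVec, secondMoment, of_apply]

theorem secondMoment_norm_sq_eq_diagonal (f : (ι → ℝ) → ℝ) :
    secondMoment (complexGaussian ι) (fun z => f fun i => ‖z i‖ ^ 2) =
      diagonal fun j => ((∫ z, (f fun i => ‖z i‖ ^ 2) * ‖z j‖ ^ 2 ∂complexGaussian ι : ℝ) : ℂ) := by
  ext j k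
  rcases eq_or_ne j k with rfl | hjk
  · simp only [secondMoment, of_apply, diagonal_apply_eq, ← integral_complex_ofReal]
    congr with z
    rw [RCLike.star_def, Complex.mul_conj']
    push_cast
    rw [Complex.real_smul]
  let ε : ι → ℂ := fun l => if l = j then -1 else 1
  have mem_unitary : diagonal ε ∈ unitaryGroup ι ℂ := by
    rw [mem_unitaryGroup_iff, star_eq_conjTranspose, diagonal_conjTranspose, diagonal_mul_diagonal,
      ← diagonal_one]
    congr with l
    by_cases h : l = j <;> simp [ε, h]
  have h := integral_unitary_mulVec ⟨_, mem_unitary⟩ fun z : ι → ℂ =>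
    (f fun i => ‖z i‖ ^ 2) • (z j * star (z k))
  have norm_flip (l : ι) (w : ℂ) : ‖ε l * w‖ = ‖w‖ := by
    by_cases h : l = j <;> simp [ε, h]
  simp only [mulVec_diagonal, norm_flip] at h
  simp only [ε, if_true, if_neg hjk.symm, one_mul, neg_mul, smul_neg, integral_neg] at h
  rw [diagonal_apply_ne _ hjk]
  exact self_eq_neg.mp h.symm

theorem secondMoment_complexGaussian_one :
    secondMoment (complexGaussian ι) (fun _ => 1) = (2 : ℝ) • 1 := by
  rw [secondMoment_norm_sq_eq_diagonal fun _ => 1, ← diagonal_one, ← diagonal_smul]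
  congr with j
  simp [integral_norm_sq_eval_complexGaussian]

theorem secondMoment_argmaxWeight [Nontrivial ι] (i : ι) :
    secondMoment (complexGaussian ι) (fun z => argmaxWeight (fun k => ‖z k‖ ^ 2) i) =
      (2 * criticalVisibility (Fintype.card ι)) • diagonal (Pi.single i 1) +
        (2 * (1 - criticalVisibility (Fintype.card ι)) / Fintype.card ι) • 1 := by
  rw [secondMoment_norm_sq_eq_diagonal fun s => argmaxWeight s i, ← diagonal_one,
    ← diagonal_smul, ← diagonal_smul, diagonal_add]
  congr with j
  rw [integral_argmaxWeight_mul_norm_sq]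
  by_cases h : j = i <;> simp [h]

end SecondMoment

section Diagonalization

variable {n A : Type*} [Fintype n] [DecidableEq n] [Fintype A]

theorem IsProjMeasurement.sum_smul_mul {M : A → Matrix n n ℂ} (hM : IsProjMeasurement M)
    (c : A → ℂ) (a : A) : (∑ b, c b • M b) * M a = c a • M a := by
  obtain ⟨-, idem, orth, -⟩ := hM
  rw [Finset.sum_mul, Fintype.sum_eq_single a fun b hb => by rw [smul_mul, orth b a hb, smul_zero],
    smul_mul, idem]

variable [DecidableEq A]

theorem exists_eq_diagonal_of_diagonal_mul_eq_smul {𝕜 : Type*} [Field 𝕜] {D : A → Matrix n n 𝕜}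
    (sum_D : ∑ a, D a = 1) {l : n → 𝕜} {c : A → 𝕜} (hc : c.Injective)
    (hD : ∀ a, diagonal l * D a = c a • D a) :
    ∃ g : n → A, ∀ a, D a = diagonal fun i => if g i = a then 1 else 0 := by
  have sum_apply (i j : n) : ∑ a, D a i j = (1 : Matrix n n 𝕜) i j := by
    rw [← sum_D, Matrix.sum_apply]
  have eigenvalue_eq {a : A} {i j : n} (h : D a i j ≠ 0) : l i = c a := by
    have h_entry := congr_fun₂ (hD a) i j
    rw [diagonal_mul, Matrix.smul_apply, smul_eq_mul] at h_entry
    exact mul_right_cancel₀ h h_entry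
  have exists_outcome (i : n) : ∃ a, D a i i ≠ 0 := by
    by_contra! h
    simpa [h] using sum_apply i i
  choose g hg using exists_outcome
  have entry_eq_zero {a : A} {i : n} (h : g i ≠ a) (j : n) : D a i j = 0 := by
    by_contra h0
    exact h (hc ((eigenvalue_eq (hg i)).symm.trans (eigenvalue_eq h0)))
  refine ⟨g, fun a => ?_⟩
  ext i j
  by_cases h : g i = a
  · have row_eq := sum_apply i j
    rw [Fintype.sum_eq_single a fun b hb => entry_eq_zero (h.trans_ne hb.symm) j] at row_eq
    simp [row_eq, diagonal_apply, one_apply, h]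
  · simp [entry_eq_zero h, diagonal_apply, h]

theorem IsProjMeasurement.exists_unitary_eq_diagonal {M : A → Matrix n n ℂ}
    (hM : IsProjMeasurement M) :
    ∃ (U : unitaryGroup n ℂ) (g : n → A), ∀ a,
      M a = (U : Matrix n n ℂ)ᴴ * diagonal (fun i => if g i = a then 1 else 0) *
        (U : Matrix n n ℂ) := by
  -- An observable with a different eigenvalue for each outcome.
  let c (a : A) : ℂ := (Fintype.equivFin A a : ℕ)
  have c_injective : c.Injective :=
    Nat.cast_injective.comp (Fin.val_injective.comp (Fintype.equivFin A).injective)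
  have hH : (∑ a, c a • M a).IsHermitian := by
    simp [IsHermitian, conjTranspose_sum, c, hM.1]
  let V : Matrix n n ℂ := hH.eigenvectorUnitary
  have hV : Vᴴ * V = 1 := Unitary.coe_star_mul_self hH.eigenvectorUnitary
  have hV' : V * Vᴴ = 1 := Unitary.coe_mul_star_self hH.eigenvectorUnitary
  have spectral : Vᴴ * (∑ a, c a • M a) * V = diagonal (RCLike.ofReal ∘ hH.eigenvalues) := by
    rw [← hH.conjStarAlgAut_star_eigenvectorUnitary, Unitary.conjStarAlgAut_star_apply]
    rfl
  have sum_conj : ∑ a, Vᴴ * M a * V = 1 := by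
    rw [← Finset.sum_mul, ← Finset.mul_sum, hM.2.2.2, Matrix.mul_one, hV]
  obtain ⟨g, hg⟩ := exists_eq_diagonal_of_diagonal_mul_eq_smul sum_conj c_injective fun a => by
    rw [← spectral]
    calc Vᴴ * (∑ b, c b • M b) * V * (Vᴴ * M a * V)
        = Vᴴ * (∑ b, c b • M b) * (V * Vᴴ) * M a * V := by simp only [Matrix.mul_assoc]
      _ = Vᴴ * ((∑ b, c b • M b) * M a) * V := by
          rw [hV', Matrix.mul_one, Matrix.mul_assoc _ _ (M a)]
      _ = c a • (Vᴴ * M a * V) := by rw [hM.sum_smul_mul, Matrix.mul_smul, Matrix.smul_mul]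
  refine ⟨star hH.eigenvectorUnitary, g, fun a => ?_⟩
  rw [← hg]
  change M a = Vᴴᴴ * (Vᴴ * M a * V) * Vᴴ
  rw [conjTranspose_conjTranspose]
  calc M a = (V * Vᴴ) * M a * (V * Vᴴ) := by rw [hV', Matrix.one_mul, Matrix.mul_one]
    _ = V * (Vᴴ * M a * V) * Vᴴ := by simp only [Matrix.mul_assoc]

end Diagonalization

section Responses

variable {ι A : Type*} [Fintype ι] [DecidableEq ι] [Fintype A]

theorem secondMoment_sum_argmaxWeight [Nontrivial ι] (s : Finset ι) :
    secondMoment (complexGaussian ι) (fun z => ∑ i ∈ s, argmaxWeight (fun k => ‖z k‖ ^ 2) i) =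
      (2 * criticalVisibility (Fintype.card ι)) • diagonal (fun i => if i ∈ s then 1 else 0) +
        (2 * (1 - criticalVisibility (Fintype.card ι)) / Fintype.card ι) • (s.card : ℂ) • 1 := by
  rw [secondMoment_sum s fun i _ => hasSecondMoment_argmaxWeight i]
  simp only [secondMoment_argmaxWeight, Finset.sum_add_distrib, ← Finset.smul_sum, Finset.sum_const]
  congr 2
  · ext j k
    simp [Matrix.sum_apply, diagonal_apply, Pi.single_apply]
  · rw [Nat.cast_smul_eq_nsmul]

theorem IsProjMeasurement.exists_response [Nontrivial ι] {M : A → Matrix ι ι ℂ}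
    (hM : IsProjMeasurement M) :
    ∃ R : A → (ι → ℂ) → ℝ, (∀ a, Measurable (R a)) ∧ (∀ z, (fun a => R a z) ∈ stdSimplex ℝ A) ∧
      ∀ a, secondMoment (complexGaussian ι) (R a) =
        (2 * criticalVisibility (Fintype.card ι)) • M a +
          (2 * (1 - criticalVisibility (Fintype.card ι)) / Fintype.card ι) • (M a).trace • 1 := by
  classical
  obtain ⟨U, g, hg⟩ := hM.exists_unitary_eq_diagonal
  have hU : (U : Matrix ι ι ℂ)ᴴ * (U : Matrix ι ι ℂ) = 1 := mem_unitaryGroup_iff'.mp U.2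
  have hU' : (U : Matrix ι ι ℂ) * (U : Matrix ι ι ℂ)ᴴ = 1 := mem_unitaryGroup_iff.mp U.2
  let w (a : A) (z : ι → ℂ) : ℝ := ∑ i with g i = a, argmaxWeight (fun k => ‖z k‖ ^ 2) i
  have measurable_w (a : A) : Measurable (w a) :=
    Finset.measurable_fun_sum _ fun i _ => measurable_argmaxWeight_norm_sq i
  have w_mem (z : ι → ℂ) : (fun a => w a z) ∈ stdSimplex ℝ A := by
    obtain ⟨nonneg, sum_one⟩ := argmaxWeight_mem_stdSimplex fun k => ‖z k‖ ^ 2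
    refine ⟨fun a => Finset.sum_nonneg fun i _ => nonneg i, ?_⟩
    exact (Finset.sum_fiberwise _ g _).trans sum_one
  refine ⟨fun a z => w a ((U : Matrix ι ι ℂ) *ᵥ z), fun a => ?_, fun z => w_mem _, fun a => ?_⟩
  · exact (measurable_w a).comp (by fun_prop)
  have hasSecondMoment_w : HasSecondMoment (complexGaussian ι) (w a) :=
    hasSecondMoment_of_mem_Icc memLp_eval_complexGaussian (measurable_w a) fun z =>
      mem_Icc_of_mem_stdSimplex (w_mem z) a
  have trace_M : (M a).trace = ((Finset.univ.filter fun i => g i = a).card : ℂ) := by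
    rw [hg, trace_mul_cycle, hU', Matrix.one_mul, trace_diagonal, Finset.sum_boole]
  rw [secondMoment_comp_unitary U hasSecondMoment_w, secondMoment_sum_argmaxWeight, trace_M, hg]
  simp only [Finset.mem_filter_univ, Matrix.mul_add, Matrix.add_mul, Matrix.mul_smul,
    Matrix.smul_mul, Matrix.mul_one, hU]

end Responses

section Discretization

variable {X A ι : Type*} [Fintype A]

theorem sum_filter_apply_eq_prod [Fintype X] [DecidableEq X] [DecidableEq A] {𝕜 : Type*}
    [CommSemiring 𝕜] {r : X → A → 𝕜} (hr : ∀ x, ∑ a, r x a = 1) (x : X) (a : A) :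
    ∑ f : X → A with f x = a, ∏ y, r y (f y) = r x a := by
  have filter_eq : (Finset.univ.filter fun f : X → A => f x = a) =
      Fintype.piFinset (Function.update (fun _ => Finset.univ) x ({a} : Finset A)) := by
    ext f
    simp only [Finset.mem_filter_univ, Fintype.mem_piFinset]
    refine ⟨fun h y => ?_, fun h => by simpa using h x⟩
    by_cases hy : y = x
    · subst hy
      simp [h]
    · simp [hy]
  rw [filter_eq, ← Finset.prod_univ_sum, Fintype.prod_eq_single x]
  · simp
  · intro y hy
    simp [hy, hr y]

theorem hasLHSModel_secondMoment [Finite X] [Finite ι] {μ : Measure (ι → ℂ)}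
    (hμ : ∀ j, MemLp (fun z => z j) 2 μ) {R : X → A → (ι → ℂ) → ℝ}
    (hR : ∀ x a, Measurable (R x a)) (hR_mem : ∀ x z, (fun a => R x a z) ∈ stdSimplex ℝ A) :
    HasLHSModel (secondMoment μ fun _ => 1) fun x a => secondMoment μ (R x a) := by
  classical
  cases nonempty_fintype X
  -- The discrete hidden variable `f` is a deterministic strategy, drawn by answering every setting
  -- `x` independently according to `R x`.
  let w (f : X → A) (z : ι → ℂ) : ℝ := ∏ x, R x (f x) z
  have w_nonneg (f : X → A) (z : ι → ℂ) : 0 ≤ w f z :=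
    Finset.prod_nonneg fun x _ => (hR_mem x z).1 (f x)
  have hasSecondMoment_w (f : X → A) : HasSecondMoment μ (w f) :=
    hasSecondMoment_of_mem_Icc hμ (Finset.measurable_fun_prod _ fun x _ => hR x (f x)) fun z =>
      ⟨w_nonneg f z, Finset.prod_le_one (fun x _ => (hR_mem x z).1 (f x)) fun x _ =>
        (mem_Icc_of_mem_stdSimplex (hR_mem x z) (f x)).2⟩
  have total : ∑ f, secondMoment μ (w f) = secondMoment μ fun _ => 1 := by
    rw [← secondMoment_sum _ fun f _ => hasSecondMoment_w f]
    congr with z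
    rw [← Fintype.prod_sum fun x a => R x a z]
    exact Finset.prod_eq_one fun x _ => (hR_mem x z).2
  have marginal (x : X) (a : A) :
      ∑ f : X → A, (Pi.single (f x) 1 : A → ℝ) a • secondMoment μ (w f) =
        secondMoment μ (R x a) := by
    simp only [Pi.single_apply, ite_smul, one_smul, zero_smul, eq_comm (a := a)]
    rw [← Finset.sum_filter, ← secondMoment_sum _ fun f _ => hasSecondMoment_w f]
    congr with z
    exact sum_filter_apply_eq_prod (fun x => (hR_mem x z).2) x a
  have model := hasLHSModel_of_fintype (P := fun x (f : X → A) => (Pi.single (f x) 1 : A → ℝ))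
    (fun x f => single_mem_stdSimplex ℝ (f x)) fun f =>
      secondMoment_posSemidef (hasSecondMoment_w f) (w_nonneg f)
  simpa only [total, marginal] using model

end Discretization

section IsotropicState

variable {d : ℕ}

/-- The unnormalized state `tr_A[(M ⊗ 1) ρ]` to which Bob's half of the isotropic state
`ρ = isoState d p` is steered when Alice measures the effect `M`. -/
noncomputable def isoSteeredState (d : ℕ) (p : ℝ) (M : Matrix (Fin d) (Fin d) ℂ) :
    Matrix (Fin d) (Fin d) ℂ :=
  (p / d) • Mᵀ + ((1 - p) / d ^ 2) • M.trace • (1 : Matrix (Fin d) (Fin d) ℂ)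

theorem maxEnt_eq_smul_vec_one (d : ℕ) : maxEnt d = ((√d)⁻¹ : ℂ) • vec 1 := by
  ext ⟨i, j⟩
  simp [maxEnt, vec, one_apply, eq_comm]

theorem trace_kronecker_mul_projME (M N : Matrix (Fin d) (Fin d) ℂ) :
    ((M ⊗ₖ N) * projME d).trace = (d : ℂ)⁻¹ * (N * Mᵀ).trace := by
  have sqrt_mul_sqrt : (√d : ℂ) * √d = d := by
    rw [← Complex.ofReal_mul, Real.mul_self_sqrt d.cast_nonneg, Complex.ofReal_natCast]
  rw [projME, mul_vecMulVec, trace_vecMulVec, dotProduct_comm, maxEnt_eq_smul_vec_one, mulVec_smul,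
    kronecker_mulVec_vec, star_smul, smul_dotProduct, dotProduct_smul, star_vec_dotProduct_vec,
    conjTranspose_one, Matrix.one_mul, Matrix.mul_one, smul_smul, smul_eq_mul, ← sqrt_mul_sqrt,
    mul_inv, RCLike.star_def, map_inv₀, Complex.conj_ofReal]

theorem trace_kronecker_mul_isoState (p : ℝ) (M N : Matrix (Fin d) (Fin d) ℂ) :
    ((M ⊗ₖ N) * isoState d p).trace = (N * isoSteeredState d p M).trace := by
  simp only [isoState, isoSteeredState, Matrix.mul_add, Matrix.mul_smul, Matrix.mul_one, trace_add,
    trace_smul, trace_kronecker, trace_kronecker_mul_projME, smul_eq_mul, Complex.real_smul]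
  push_cast
  ring

theorem isoSteeredState_mul (t p : ℝ) (M : Matrix (Fin d) (Fin d) ℂ) :
    isoSteeredState d (t * p) M =
      t • isoSteeredState d p M +
        ((1 - t) / d ^ 2) • M.trace • (1 : Matrix (Fin d) (Fin d) ℂ) := by
  simp only [isoSteeredState]
  module

variable {X A : Type*} [Finite X] [Fintype A] {M : X → A → Matrix (Fin d) (Fin d) ℂ}

theorem hasLHSModel_isoSteeredState_criticalVisibility (hd : 2 ≤ d)
    (hM : ∀ x, IsProjMeasurement (M x)) :
    HasLHSModel ((d : ℝ)⁻¹ • 1) fun x a => isoSteeredState d (criticalVisibility d) (M x a) := by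
  have : Nontrivial (Fin d) := Fin.nontrivial_iff_two_le.mpr hd
  choose R measurable_R R_mem moment_R using fun x => (hM x).transpose.exists_response
  have model := (hasLHSModel_secondMoment memLp_eval_complexGaussian measurable_R R_mem).smul
    (c := (2 * d)⁻¹) (by positivity)
  have rescale_one : (2 * d : ℝ)⁻¹ • (2 : ℝ) • (1 : Matrix (Fin d) (Fin d) ℂ) = (d : ℝ)⁻¹ • 1 := by
    module
  have rescale_R (x : X) (a : A) : (2 * d : ℝ)⁻¹ • secondMoment (complexGaussian (Fin d)) (R x a) =
      isoSteeredState d (criticalVisibility d) (M x a) := by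
    rw [moment_R, isoSteeredState, Fintype.card_fin, trace_transpose]
    module
  simpa only [secondMoment_complexGaussian_one, rescale_one, rescale_R] using model

theorem hasLHSModel_isoSteeredState (hd : 2 ≤ d) {p : ℝ}
    (hp : p ∈ Set.Icc 0 (criticalVisibility d)) (hM : ∀ x, IsProjMeasurement (M x)) :
    HasLHSModel ((d : ℝ)⁻¹ • 1) fun x a => isoSteeredState d p (M x a) := by
  have : Nonempty (Fin d) := ⟨⟨0, by omega⟩⟩
  have noise_mem (x : X) := (hM x).isPOVM.re_trace_mul_mem_stdSimplex
    (isDensityMatrix_maximallyMixed (Fin d))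
  have ht : p / criticalVisibility d ∈ Set.Icc (0 : ℝ) 1 :=
    ⟨div_nonneg hp.1 (criticalVisibility_pos hd).le,
      div_le_one_of_le₀ hp.2 (criticalVisibility_pos hd).le⟩
  have model := (hasLHSModel_isoSteeredState_criticalVisibility hd hM).add_noise noise_mem ht
  convert model using 3 with x a
  have trace_real : ((M x a).trace.re : ℂ) = (M x a).trace := by
    simpa using ofReal_re_trace_mul_of_posSemidef PosSemidef.one ((hM x).isPOVM.posSemidef a)
  have noise_eq : (M x a * ((Fintype.card (Fin d) : ℝ)⁻¹ • 1)).trace.re =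
      (d : ℝ)⁻¹ * (M x a).trace.re := by
    simp
  conv_lhs => rw [← div_mul_cancel₀ p (criticalVisibility_pos hd).ne', isoSteeredState_mul]
  rw [noise_eq, ← trace_real, Complex.coe_smul]
  module

end IsotropicState

theorem isoState_8_024_LHV_projective_general {d : ℕ} (hd : 2 ≤ d) {p : ℝ}
    (hp : p ∈ Set.Icc 0 (criticalVisibility d)) {X Y A B : Type*} [Finite X] [Fintype A]
    [Fintype B] {M : X → A → Matrix (Fin d) (Fin d) ℂ} {N : Y → B → Matrix (Fin d) (Fin d) ℂ}
    (hM : ∀ x, IsProjMeasurement (M x)) (hN : ∀ y, IsPOVM (N y)) :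
    IsLocalCorrelation fun a b x y => ((M x a ⊗ₖ N y b) * isoState d p).trace := by
  have : Nonempty (Fin d) := ⟨⟨0, by omega⟩⟩
  have trace_reduced : ((d : ℝ)⁻¹ • (1 : Matrix (Fin d) (Fin d) ℂ)).trace = 1 := by
    simpa using (isDensityMatrix_maximallyMixed (Fin d)).2
  simpa only [trace_kronecker_mul_isoState] using
    (hasLHSModel_isoSteeredState hd hp hM).isLocalCorrelation trace_reduced hN

/-- Lemma 3: the isotropic state `ρ^iso₈(0.24)` admits a local hidden
variable model under local projective measurements. -/
theorem isoState_8_024_LHV_projective :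
    ∀ (X Y A B : Type) [Fintype X] [Fintype Y] [Fintype A] [Fintype B]
      (M : X → A → Matrix (Fin 8) (Fin 8) ℂ) (N : Y → B → Matrix (Fin 8) (Fin 8) ℂ),
      (∀ x, IsProjMeasurement (M x)) → (∀ y, IsProjMeasurement (N y)) →
      ∃ (nΛ : ℕ) (q : Fin nΛ → ℝ) (P : A → X → Fin nΛ → ℝ) (Q : B → Y → Fin nΛ → ℝ),
        (∀ μ, 0 ≤ q μ) ∧ (∑ μ, q μ = 1) ∧
        (∀ a x μ, 0 ≤ P a x μ) ∧ (∀ x μ, ∑ a, P a x μ = 1) ∧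
        (∀ b y μ, 0 ≤ Q b y μ) ∧ (∀ y μ, ∑ b, Q b y μ = 1) ∧
        (∀ a b x y,
          Matrix.trace ((M x a ⊗ₖ N y b) * isoState 8 0.24) =
            ((∑ μ, q μ * P a x μ * Q b y μ : ℝ) : ℂ)) := by
  intro X Y A B _ _ _ _ M N hM hN
  have le_criticalVisibility : (0.24 : ℝ) ≤ criticalVisibility 8 := by
    norm_num [criticalVisibility, harmonic, Finset.sum_range_succ]
  exact isoState_8_024_LHV_projective_general (by norm_num) ⟨by norm_num, le_criticalVisibility⟩ hM
    fun y => (hN y).isPOVM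
end

section
/- For all positive integers dA, dB and every integer r with 1 ≤ r ≤ min(dA,dB), if ρ is a density matrix on ℂ^{dA}⊗ℂ^{dB} whose Schmidt number is strictly greater than r, then there exists a Hermitian matrix W (indexed by (Fin dA × Fin dB) × (Fin dA × Fin dB)) such that Tr[Wρ] < 0 while Tr[Wσ] ≥ 0 for every density matrix σ with Schmidt number at most r. -/
open Matrix
open scoped Kronecker ComplexOrder

/-! The matrices of Schmidt number at most `r` form a convex cone, and this cone is closed:
Carathéodory's theorem bounds the number of terms needed by a constant `N`, so the cone is the
image, under the proper map `X ↦ X * Xᴴ`, of the closed set of matrices `X` whose `N` columns all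
have Schmidt rank at most `r`. A Hermitian `ρ` outside the cone is therefore separated from it by a
real linear functional, and on Hermitian matrices every such functional is `A ↦ Tr[W A]` for a
Hermitian `W`. -/

section ScalingInvariant

variable {E : Type*} [AddCommGroup E] [Module ℝ E] {s : Set E}

theorem sum_mem_convexHull_of_smul_mem {ι : Type*} [Fintype ι] (zero_mem : 0 ∈ s)
    (smul_mem : ∀ c : ℝ, 0 ≤ c → ∀ x ∈ s, c • x ∈ s) {g : ι → E} (hg : ∀ i, g i ∈ s) :
    ∑ i, g i ∈ convexHull ℝ s := by
  cases isEmpty_or_nonempty ι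
  · simpa using subset_convexHull ℝ s zero_mem
  · have card_ne_zero : (Fintype.card ι : ℝ) ≠ 0 := by simp
    have sum_eq_average : ∑ i, g i =
        ∑ i, (Fintype.card ι : ℝ)⁻¹ • (Fintype.card ι : ℝ) • g i := by
      simp only [inv_smul_smul₀ card_ne_zero]
    rw [sum_eq_average]
    exact (convex_convexHull ℝ s).sum_mem (fun _ _ => by positivity) (by simp)
      fun i _ => subset_convexHull ℝ s (smul_mem _ (by positivity) _ (hg i))

theorem exists_fin_sum_eq_of_mem_convexHull [FiniteDimensional ℝ E] (zero_mem : 0 ∈ s)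
    (smul_mem : ∀ c : ℝ, 0 ≤ c → ∀ x ∈ s, c • x ∈ s) {x : E} (hx : x ∈ convexHull ℝ s) :
    ∃ g : Fin (Module.finrank ℝ E + 1) → E, (∀ k, g k ∈ s) ∧ ∑ k, g k = x := by
  obtain ⟨ι, _, z, w, hz, hindep, hw, -, rfl⟩ := eq_pos_convex_span_of_mem_convexHull hx
  have card_le : Fintype.card ι ≤ Fintype.card (Fin (Module.finrank ℝ E + 1)) := by
    rw [Fintype.card_fin]
    exact hindep.card_le_finrank_succ.trans (Nat.succ_le_succ (Submodule.finrank_le _))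
  obtain ⟨e⟩ := Function.Embedding.nonempty_of_card_le card_le
  let g : Fin (Module.finrank ℝ E + 1) → E := Function.extend e (fun i => w i • z i) 0
  have g_apply (i : ι) : g (e i) = w i • z i := e.injective.extend_apply _ _ i
  have g_eq_zero (k) (hk : k ∉ Set.range e) : g k = 0 := Function.extend_apply' _ _ k hk
  refine ⟨g, fun k => ?_, ?_⟩
  · by_cases hk : k ∈ Set.range e
    · obtain ⟨i, rfl⟩ := hk
      rw [g_apply]
      exact smul_mem _ (hw i).le _ (hz ⟨i, rfl⟩)
    · rwa [g_eq_zero k hk]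
  · exact (Fintype.sum_of_injective e e.injective _ g g_eq_zero fun i => (g_apply i).symm).symm

end ScalingInvariant

section Matrix

variable {m n : Type*} [Fintype n]

theorem rank_smul_le {R : Type*} [CommRing R] [IsDomain R] (c : R) (A : Matrix m n R) :
    (c • A).rank ≤ A.rank := by
  obtain rfl | hc := eq_or_ne c 0
  · simp
  · exact (rank_smul_of_mem_nonZeroDivisors A (mem_nonZeroDivisors_of_ne_zero hc)).le

theorem isClosed_setOf_rank_le {𝕜 : Type*} [NontriviallyNormedField 𝕜] [CompleteSpace 𝕜]
    [Finite m] (r : ℕ) : IsClosed {A : Matrix m n 𝕜 | A.rank ≤ r} := by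
  classical
  have := Fintype.ofFinite m
  let toCLM : Matrix m n 𝕜 ≃ₗ[𝕜] ((n → 𝕜) →L[𝕜] (m → 𝕜)) :=
    toLin'.trans LinearMap.toContinuousLinearMap
  have rank_toCLM (A : Matrix m n 𝕜) :
      ((toCLM A : (n → 𝕜) →L[𝕜] (m → 𝕜)) : (n → 𝕜) →ₗ[𝕜] (m → 𝕜)).rank = (A.rank : Cardinal) :=
    (Module.finrank_eq_rank _ _).symm
  have isOpen_lt_rank := (isOpen_setOfPred_nat_le_rank (r + 1)).preimage
    toCLM.toLinearMap.continuous_of_finiteDimensional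
  convert isOpen_lt_rank.isClosed_compl using 1
  ext A
  simp [rank_toCLM, -Nat.cast_add]

open scoped Matrix.Norms.L2Operator in
theorem isClosedMap_mul_conjTranspose_self {𝕜 : Type*} [RCLike 𝕜] [Finite m] :
    IsClosedMap fun X : Matrix m n 𝕜 => X * Xᴴ := by
  classical
  have := Fintype.ofFinite m
  have norm_mul_conjTranspose_self (X : Matrix m n 𝕜) : ‖X * Xᴴ‖ = ‖X‖ * ‖X‖ := by
    simpa [l2_opNorm_conjTranspose] using l2_opNorm_conjTranspose_mul_self Xᴴ
  have : ProperSpace (Matrix m n 𝕜) := FiniteDimensional.proper_rclike 𝕜 _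
  have : ProperSpace (Matrix m m 𝕜) := FiniteDimensional.proper_rclike 𝕜 _
  refine (isProperMap_iff_tendsto_cocompact.mpr ⟨by fun_prop, ?_⟩).isClosedMap
  rw [← Metric.cobounded_eq_cocompact, ← Metric.cobounded_eq_cocompact,
    ← tendsto_norm_atTop_iff_cobounded]
  simp only [norm_mul_conjTranspose_self]
  exact tendsto_norm_cobounded_atTop.atTop_mul_atTop₀ tendsto_norm_cobounded_atTop

theorem mul_conjTranspose_eq_sum_vecMulVec {R : Type*} [NonUnitalNonAssocSemiring R] [Star R]
    (X : Matrix m n R) : X * Xᴴ = ∑ k, vecMulVec (X.col k) (star (X.col k)) := by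
  ext i j
  simp [mul_apply, vecMulVec_apply, Matrix.sum_apply]

theorem vecMulVec_ofReal_smul_star {𝕜 : Type*} [RCLike 𝕜] (c : ℝ) (ψ : m → 𝕜) :
    vecMulVec ((c : 𝕜) • ψ) (star ((c : 𝕜) • ψ)) = c ^ 2 • vecMulVec ψ (star ψ) := by
  rw [star_smul, smul_vecMulVec, vecMulVec_smul, smul_smul, RCLike.star_def, RCLike.conj_ofReal,
    ← sq, ← RCLike.ofReal_pow, RCLike.real_smul_eq_coe_smul (K := 𝕜)]

theorem exists_forall_trace_mul_eq {R : Type*} [CommSemiring R] [Fintype m]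
    (f : Matrix m n R →ₗ[R] R) : ∃ W : Matrix n m R, ∀ A, trace (W * A) = f A := by
  classical
  let W : Matrix n m R := of fun j i => f (single i j 1)
  suffices traceLinearMap n R R ∘ₗ mulLeftLinearMap n R W = f from
    ⟨W, fun A => LinearMap.congr_fun this A⟩
  refine ext_linearMap R fun i j => LinearMap.ext_ring ?_
  simp [W, trace_mul_single]

theorem exists_isHermitian_forall_trace_mul_eq (f : Matrix n n ℂ →ₗ[ℝ] ℝ) :
    ∃ W : Matrix n n ℂ, W.IsHermitian ∧
      ∀ A : Matrix n n ℂ, A.IsHermitian → trace (W * A) = f A := by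
  obtain ⟨V, hV⟩ := exists_forall_trace_mul_eq (Module.Dual.extendRCLike (𝕜 := ℂ) f)
  refine ⟨realPart V, (realPart V).2, fun A hA => ?_⟩
  have trace_star_mul : trace (star V * A) = star (trace (V * A)) := by
    rw [← trace_conjTranspose, conjTranspose_mul, hA.eq, trace_mul_comm, star_eq_conjTranspose]
  calc trace ((realPart V : Matrix n n ℂ) * A)
      = ((trace (V * A)).re : ℂ) := by
        rw [realPart_apply_coe, smul_mul_assoc, add_mul, trace_smul, trace_add, trace_star_mul,
          Complex.re_eq_add_conj, Complex.star_def, Complex.real_smul]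
        push_cast
        ring
    _ = f A := by
        rw [hV, ← RCLike.re_eq_complex_re, Module.Dual.re_extendRCLike_apply]

end Matrix

section SchmidtNumber

variable {m n : Type*} [Fintype m] [Fintype n] {r : ℕ}

theorem schmidtRank_smul_le (c : ℂ) (ψ : m × n → ℂ) : schmidtRank (c • ψ) ≤ schmidtRank ψ :=
  rank_smul_le c (of fun i j => ψ (i, j))

theorem schmidtRank_zero : schmidtRank (0 : m × n → ℂ) = 0 :=
  rank_zero

theorem isClosed_setOf_schmidtRank_le (r : ℕ) :
    IsClosed {ψ : m × n → ℂ | schmidtRank ψ ≤ r} :=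
  (isClosed_setOf_rank_le r).preimage
    (f := fun ψ : m × n → ℂ => of fun i j => ψ (i, j)) (by fun_prop)

/-- The unnormalised pure states `ψ ψ†` with `ψ` of Schmidt rank at most `r`; they generate the
cone of matrices of Schmidt number at most `r`. -/
def pureSchmidtRankLE (m n : Type*) [Fintype m] [Fintype n] (r : ℕ) :
    Set (Matrix (m × n) (m × n) ℂ) :=
  (fun ψ => vecMulVec ψ (star ψ)) '' {ψ | schmidtRank ψ ≤ r}

theorem zero_mem_pureSchmidtRankLE : 0 ∈ pureSchmidtRankLE m n r :=
  ⟨0, by simp [schmidtRank_zero], by simp⟩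

theorem smul_mem_pureSchmidtRankLE (c : ℝ) (hc : 0 ≤ c) (A : Matrix (m × n) (m × n) ℂ)
    (hA : A ∈ pureSchmidtRankLE m n r) : c • A ∈ pureSchmidtRankLE m n r := by
  obtain ⟨ψ, hψ, rfl⟩ := hA
  exact ⟨(√c : ℂ) • ψ, (schmidtRank_smul_le _ ψ).trans hψ,
    (vecMulVec_ofReal_smul_star (√c) ψ).trans (by rw [Real.sq_sqrt hc])⟩

theorem schmidtNumberLE_iff_exists_mul_conjTranspose {A : Matrix (m × n) (m × n) ℂ} :
    SchmidtNumberLE A r ↔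
      ∃ X : Matrix (m × n) (Fin (Module.finrank ℝ (Matrix (m × n) (m × n) ℂ) + 1)) ℂ,
        (∀ k, schmidtRank (X.col k) ≤ r) ∧ X * Xᴴ = A := by
  constructor
  · rintro ⟨k, ψ, hψ, rfl⟩
    have mem_convexHull := sum_mem_convexHull_of_smul_mem zero_mem_pureSchmidtRankLE
      smul_mem_pureSchmidtRankLE fun i => ⟨ψ i, hψ i, rfl⟩
    obtain ⟨g, hg, sum_g⟩ := exists_fin_sum_eq_of_mem_convexHull zero_mem_pureSchmidtRankLE
      smul_mem_pureSchmidtRankLE mem_convexHull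
    choose φ hφ hφg using hg
    refine ⟨of fun p j => φ j p, hφ, ?_⟩
    rw [mul_conjTranspose_eq_sum_vecMulVec, ← sum_g]
    exact Finset.sum_congr rfl fun j _ => hφg j
  · rintro ⟨X, hX, rfl⟩
    exact ⟨_, X.col, hX, mul_conjTranspose_eq_sum_vecMulVec X⟩

theorem isClosed_setOf_schmidtNumberLE (r : ℕ) :
    IsClosed {A : Matrix (m × n) (m × n) ℂ | SchmidtNumberLE A r} := by
  simp only [schmidtNumberLE_iff_exists_mul_conjTranspose]
  refine isClosedMap_mul_conjTranspose_self {X | ∀ k, schmidtRank (X.col k) ≤ r} ?_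
  simp only [Set.ofPred_forall]
  exact isClosed_iInter fun k => (isClosed_setOf_schmidtRank_le r).preimage
    (f := fun X : Matrix (m × n) _ ℂ => X.col k)
    (continuous_pi fun p => continuous_id.matrix_elem p k)

theorem SchmidtNumberLE.isHermitian {A : Matrix (m × n) (m × n) ℂ} (hA : SchmidtNumberLE A r) :
    A.IsHermitian := by
  obtain ⟨k, ψ, -, rfl⟩ := hA
  exact (posSemidef_sum _ fun i _ => posSemidef_vecMulVec_self_star (ψ i)).isHermitian

theorem SchmidtNumberLE.add {A B : Matrix (m × n) (m × n) ℂ} (hA : SchmidtNumberLE A r)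
    (hB : SchmidtNumberLE B r) : SchmidtNumberLE (A + B) r := by
  obtain ⟨k, ψ, hψ, rfl⟩ := hA
  obtain ⟨l, φ, hφ, rfl⟩ := hB
  refine ⟨k + l, Fin.append ψ φ, fun i => ?_, by simp [Fin.sum_univ_add]⟩
  induction i using Fin.addCases with
  | left i => simpa using hψ i
  | right i => simpa using hφ i

theorem SchmidtNumberLE.smul {A : Matrix (m × n) (m × n) ℂ} (hA : SchmidtNumberLE A r) {c : ℝ}
    (hc : 0 ≤ c) : SchmidtNumberLE (c • A) r := by
  obtain ⟨k, ψ, hψ, rfl⟩ := hA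
  choose φ hφ hφψ using fun i => smul_mem_pureSchmidtRankLE c hc _ ⟨ψ i, hψ i, rfl⟩
  exact ⟨k, φ, hφ, by simp only [hφψ, Finset.smul_sum]⟩

/-- The closed convex cone of matrices of Schmidt number at most `r`. -/
def schmidtCone (m n : Type*) [Fintype m] [Fintype n] (r : ℕ) :
    ProperCone ℝ (Matrix (m × n) (m × n) ℂ) where
  carrier := {A | SchmidtNumberLE A r}
  add_mem' := SchmidtNumberLE.add
  zero_mem' := ⟨0, 0, by simp, by simp⟩
  smul_mem' c _ hA := hA.smul c.2
  isClosed' := isClosed_setOf_schmidtNumberLE r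

end SchmidtNumber

open scoped Matrix.Norms.L2Operator in
theorem schmidt_number_witness_exists_general {m n : Type*} [Fintype m] [Fintype n] {r : ℕ}
    {ρ : Matrix (m × n) (m × n) ℂ} (hρ : ρ.IsHermitian) (hSN : ¬ SchmidtNumberLE ρ r) :
    ∃ W : Matrix (m × n) (m × n) ℂ, W.IsHermitian ∧ trace (W * ρ) < 0 ∧
      ∀ σ, SchmidtNumberLE σ r → 0 ≤ trace (W * σ) := by
  classical
  obtain ⟨f, f_nonneg, f_neg⟩ := (schmidtCone m n r).hyperplane_separation_point hSN
  obtain ⟨W, hW, trace_eq⟩ := exists_isHermitian_forall_trace_mul_eq f.toLinearMap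
  refine ⟨W, hW, ?_, fun σ hσ => ?_⟩
  · rw [trace_eq ρ hρ]
    exact_mod_cast f_neg
  · rw [trace_eq σ hσ.isHermitian]
    exact_mod_cast f_nonneg σ hσ

/-- existence of Schmidt number witnesses: for every density matrix `ρ`
with Schmidt number strictly greater than `r`, there is a Hermitian `W` with
`Tr[Wρ] < 0` and `Tr[Wσ] ≥ 0` for all density matrices `σ` with Schmidt number at most `r`. -/
theorem schmidt_number_witness_exists (dA dB r : ℕ)
    (hdA : 0 < dA) (hdB : 0 < dB) (hr1 : 1 ≤ r) (hr2 : r ≤ min dA dB)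
    (ρ : Matrix (Fin dA × Fin dB) (Fin dA × Fin dB) ℂ)
    (hρ : IsDensityMatrix ρ) (hSN : ¬ SchmidtNumberLE ρ r) :
    ∃ W : Matrix (Fin dA × Fin dB) (Fin dA × Fin dB) ℂ,
      Wᴴ = W ∧
      Matrix.trace (W * ρ) < 0 ∧
      ∀ σ : Matrix (Fin dA × Fin dB) (Fin dA × Fin dB) ℂ,
        IsDensityMatrix σ → SchmidtNumberLE σ r → 0 ≤ Matrix.trace (W * σ) := by
  obtain ⟨W, hW, hWρ, hWσ⟩ := schmidt_number_witness_exists_general hρ.1.isHermitian hSN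
  exact ⟨W, hW, hWρ, fun σ _ hσ => hWσ σ hσ⟩
end

section
/- Schmidt number is monotone under local filtering: for all positive integers dA, dB, dA', dB', every positive semidefinite matrix ρ indexed by (Fin dA × Fin dB) with Schmidt number at most r, and all complex matrices A of size dA' × dA and B of size dB' × dB, the positive semidefinite matrix (A ⊗ B) ρ (A ⊗ B)† (indexed by (Fin dA' × Fin dB')) has Schmidt number at most r. -/
open Matrix
open scoped Kronecker ComplexOrder

section CoeffMatrix

variable {m n m' n' R : Type*}

/-- The coefficient matrix `C_ψ` of a bipartite vector `ψ`, whose rank is the Schmidt rank of `ψ`.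
Its rows are indexed by the first factor, so `ψ` is `Matrix.vec` (which stacks columns) of the
transpose of `C_ψ`. -/
def coeffMatrix (ψ : m × n → R) : Matrix m n R :=
  of fun i j => ψ (i, j)

theorem vec_transpose_coeffMatrix (ψ : m × n → R) : vec (coeffMatrix ψ)ᵀ = ψ :=
  rfl

theorem coeffMatrix_kronecker_mulVec [NonUnitalCommSemiring R] [Fintype m] [Fintype n]
    (A : Matrix m' m R) (B : Matrix n' n R) (ψ : m × n → R) :
    coeffMatrix ((A ⊗ₖ B) *ᵥ ψ) = A * coeffMatrix ψ * Bᵀ := by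
  apply transpose_injective
  apply vec_inj.mp
  calc vec (coeffMatrix ((A ⊗ₖ B) *ᵥ ψ))ᵀ
      = (A ⊗ₖ B) *ᵥ vec (coeffMatrix ψ)ᵀ := by simp only [vec_transpose_coeffMatrix]
    _ = vec (B * (coeffMatrix ψ)ᵀ * Aᵀ) := kronecker_mulVec_vec B (coeffMatrix ψ)ᵀ A
    _ = vec (A * coeffMatrix ψ * Bᵀ)ᵀ := by
      simp only [transpose_mul, transpose_transpose, Matrix.mul_assoc]

end CoeffMatrix

theorem mul_vecMulVec_star_mul_conjTranspose {m n R : Type*} [Fintype n] [NonUnitalSemiring R]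
    [StarRing R] (M : Matrix m n R) (v : n → R) :
    M * vecMulVec v (star v) * Mᴴ = vecMulVec (M *ᵥ v) (star (M *ᵥ v)) := by
  rw [mul_vecMulVec, vecMulVec_mul, star_mulVec]

section Schmidt

variable {m n m' n' : Type*} [Fintype m] [Fintype n] [Fintype m'] [Fintype n']

theorem schmidtRank_eq_rank_coeffMatrix (ψ : m × n → ℂ) :
    schmidtRank ψ = (coeffMatrix ψ).rank :=
  rfl

theorem schmidtRank_kronecker_mulVec_le (A : Matrix m' m ℂ) (B : Matrix n' n ℂ)
    (ψ : m × n → ℂ) : schmidtRank ((A ⊗ₖ B) *ᵥ ψ) ≤ schmidtRank ψ := by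
  simp only [schmidtRank_eq_rank_coeffMatrix, coeffMatrix_kronecker_mulVec]
  calc (A * coeffMatrix ψ * Bᵀ).rank
      ≤ (A * coeffMatrix ψ).rank := rank_mul_le_left _ _
    _ ≤ (coeffMatrix ψ).rank := rank_mul_le_right _ _

theorem SchmidtNumberLE.kronecker_mul_mul_conjTranspose {ρ : Matrix (m × n) (m × n) ℂ} {r : ℕ}
    (hρ : SchmidtNumberLE ρ r) (A : Matrix m' m ℂ) (B : Matrix n' n ℂ) :
    SchmidtNumberLE ((A ⊗ₖ B) * ρ * (A ⊗ₖ B)ᴴ) r := by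
  obtain ⟨k, ψ, hψ, rfl⟩ := hρ
  refine ⟨k, fun i => (A ⊗ₖ B) *ᵥ ψ i,
    fun i => (schmidtRank_kronecker_mulVec_le A B (ψ i)).trans (hψ i), ?_⟩
  simp only [Matrix.mul_sum, Matrix.sum_mul, mul_vecMulVec_star_mul_conjTranspose]

end Schmidt

/-- Schmidt number is monotone under local filtering:
if `SN(ρ) ≤ r` then `SN((A ⊗ B) ρ (A ⊗ B)†) ≤ r`. -/
theorem schmidt_number_le_local_filtering (dA dB dA' dB' r : ℕ)
    (hdA : 0 < dA) (hdB : 0 < dB) (hdA' : 0 < dA') (hdB' : 0 < dB')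
    (ρ : Matrix (Fin dA × Fin dB) (Fin dA × Fin dB) ℂ)
    (hρ : ρ.PosSemidef) (hSN : SchmidtNumberLE ρ r)
    (A : Matrix (Fin dA') (Fin dA) ℂ) (B : Matrix (Fin dB') (Fin dB) ℂ) :
    ((A ⊗ₖ B) * ρ * (A ⊗ₖ B)ᴴ).PosSemidef ∧
    SchmidtNumberLE ((A ⊗ₖ B) * ρ * (A ⊗ₖ B)ᴴ) r :=
  ⟨hρ.mul_mul_conjTranspose_same (A ⊗ₖ B), hSN.kronecker_mul_mul_conjTranspose A B⟩
end

section
/- Schmidt number does not increase under transposition: for all positive integers dA, dB and every positive semidefinite matrix ρ indexed by (Fin dA × Fin dB) with Schmidt number at most r, the transpose ρᵀ also has Schmidt number at most r. -/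
open Matrix
open scoped Kronecker ComplexOrder

theorem rank_map_star {m n R : Type*} [Finite m] [Fintype n] [Field R] [PartialOrder R]
    [StarRing R] [StarOrderedRing R] (A : Matrix m n R) : (A.map star).rank = A.rank := by
  cases nonempty_fintype m
  rw [← rank_transpose, ← transpose_map, ← conjTranspose, rank_conjTranspose]

section Bipartite

variable {m n : Type*} [Fintype m] [Fintype n]

theorem schmidtRank_star (ψ : m × n → ℂ) : schmidtRank (star ψ) = schmidtRank ψ :=
  rank_map_star (of fun i j => ψ (i, j))

-- Since `ψψ†` is Hermitian, its transpose is its entrywise conjugate, so conjugating every `ψ_k`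
-- transposes the whole decomposition.
theorem schmidt_number_le_transpose_general {ρ : Matrix (m × n) (m × n) ℂ} {r : ℕ}
    (hSN : SchmidtNumberLE ρ r) : SchmidtNumberLE ρᵀ r := by
  obtain ⟨k, ψ, hrank, rfl⟩ := hSN
  refine ⟨k, fun i => star (ψ i), fun i => (schmidtRank_star (ψ i)).trans_le (hrank i), ?_⟩
  simp only [transpose_sum, transpose_vecMulVec, star_star]

end Bipartite

/-- Schmidt number does not increase under transposition. -/
theorem schmidt_number_le_transpose (dA dB r : ℕ)
    (hdA : 0 < dA) (hdB : 0 < dB)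
    (ρ : Matrix (Fin dA × Fin dB) (Fin dA × Fin dB) ℂ)
    (hρ : ρ.PosSemidef) (hSN : SchmidtNumberLE ρ r) :
    SchmidtNumberLE ρᵀ r :=
  schmidt_number_le_transpose_general hSN
end

section
/- Let ρ be a positive semidefinite matrix indexed by (Fin dA × Fin dB) with Schmidt number at most r, let M be an effect indexed by (Fin dA₀ × Fin dA) (an operator on the A₀A system) and N an effect indexed by (Fin dB × Fin dB₀) (an operator on the B B₀ system). Define the matrix R indexed by (Fin dA₀ × Fin dB₀) by R_{(i₀,j₀),(i₀',j₀')} = Σ_{i,i',j,j'} M_{(i₀,i),(i₀',i')} N_{(j,j₀),(j',j₀')} ρ_{(i,j),(i',j')} (i.e., R = Tr_{AB}[(M ⊗ N)(ρ ⊗ I_{A₀B₀})] after appropriate reordering of tensor factors). Then R is positive semidefinite and has Schmidt number at most r. -/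
open Matrix
open scoped Kronecker ComplexOrder

/-!
A positive semidefinite operator is a sum of rank-one operators `u u†`, and `R` is additive in `M`
and in `N`. When `M = u u†` and `N = v v†`, reading `u` and `v` as matrices gives local operators
`K` and `L` with `R = (K ⊗ L) ρ (K ⊗ L)†`. Such an operation sends `C_ψ` to `K C_ψ Lᵀ`, so it does
not increase Schmidt ranks, and operators of Schmidt number at most `r` are closed under sums.
-/

section Schmidt

variable {m n m' n' : Type*} [Fintype m] [Fintype n] [Fintype m'] [Fintype n']

namespace SchmidtNumberLE

variable {ρ σ : Matrix (m × n) (m × n) ℂ} {r : ℕ}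

theorem posSemidef (h : SchmidtNumberLE ρ r) : ρ.PosSemidef := by
  obtain ⟨k, ψ, -, rfl⟩ := h
  exact posSemidef_sum _ fun l _ => posSemidef_vecMulVec_self_star (ψ l)

theorem zero : SchmidtNumberLE (0 : Matrix (m × n) (m × n) ℂ) r :=
  ⟨0, Fin.elim0, fun l => l.elim0, by simp⟩

theorem add_s12 (hρ : SchmidtNumberLE ρ r) (hσ : SchmidtNumberLE σ r) :
    SchmidtNumberLE (ρ + σ) r := by
  obtain ⟨k, ψ, hψ, rfl⟩ := hρ
  obtain ⟨l, φ, hφ, rfl⟩ := hσ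
  refine ⟨k + l, Fin.append ψ φ, fun i => ?_, by simp [Fin.sum_univ_add]⟩
  induction i using Fin.addCases with
  | left i => simpa using hψ i
  | right i => simpa using hφ i

theorem sum {ι : Type*} {s : Finset ι} {ρ : ι → Matrix (m × n) (m × n) ℂ}
    (h : ∀ i ∈ s, SchmidtNumberLE (ρ i) r) : SchmidtNumberLE (∑ i ∈ s, ρ i) r :=
  Finset.sum_induction ρ (SchmidtNumberLE · r) (fun _ _ => add_s12) zero h

theorem kronecker_mul_mul_conjTranspose_s12 (h : SchmidtNumberLE ρ r)
    (A : Matrix m' m ℂ) (B : Matrix n' n ℂ) :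
    SchmidtNumberLE ((A ⊗ₖ B) * ρ * (A ⊗ₖ B)ᴴ) r := by
  obtain ⟨k, ψ, hψ, rfl⟩ := h
  refine ⟨k, fun l => (A ⊗ₖ B) *ᵥ ψ l,
    fun l => (schmidtRank_kronecker_mulVec_le A B (ψ l)).trans (hψ l), ?_⟩
  simp only [Matrix.mul_sum, Matrix.sum_mul, mul_vecMulVec, vecMulVec_mul, star_mulVec]

end SchmidtNumberLE

end Schmidt

section FilteredOperator

variable {a b a₀ b₀ ι R : Type*} [Fintype a] [Fintype b]

/-- The filtered operator on `A₀B₀` obtained from `ρ` on `AB` by measuring `M` on `A₀A` and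
`N` on `BB₀`. With the index pairing used here it is `Tr_{AB}[(M ⊗ N)(ρᵀ ⊗ I_{A₀B₀})]`. -/
def filteredOperator [NonUnitalNonAssocSemiring R] (M : Matrix (a₀ × a) (a₀ × a) R)
    (N : Matrix (b × b₀) (b × b₀) R) (ρ : Matrix (a × b) (a × b) R) :
    Matrix (a₀ × b₀) (a₀ × b₀) R :=
  of fun p q => ∑ i, ∑ i', ∑ j, ∑ j',
    M (p.1, i) (q.1, i') * N (j, p.2) (j', q.2) * ρ (i, j) (i', j')

theorem filteredOperator_sum_left [NonUnitalNonAssocSemiring R] (s : Finset ι)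
    (M : ι → Matrix (a₀ × a) (a₀ × a) R) (N : Matrix (b × b₀) (b × b₀) R)
    (ρ : Matrix (a × b) (a × b) R) :
    filteredOperator (∑ k ∈ s, M k) N ρ = ∑ k ∈ s, filteredOperator (M k) N ρ := by
  ext p q
  simp_rw [filteredOperator, Matrix.sum_apply, of_apply, Finset.sum_mul,
    Finset.sum_comm (t := s)]

theorem filteredOperator_sum_right [NonUnitalNonAssocSemiring R] (s : Finset ι)
    (M : Matrix (a₀ × a) (a₀ × a) R) (N : ι → Matrix (b × b₀) (b × b₀) R)
    (ρ : Matrix (a × b) (a × b) R) :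
    filteredOperator M (∑ k ∈ s, N k) ρ = ∑ k ∈ s, filteredOperator M (N k) ρ := by
  ext p q
  simp_rw [filteredOperator, Matrix.sum_apply, of_apply, Finset.mul_sum,
    Finset.sum_mul, Finset.sum_comm (t := s)]

theorem filteredOperator_vecMulVec_star [CommSemiring R] [StarRing R] (u : a₀ × a → R)
    (v : b × b₀ → R) (ρ : Matrix (a × b) (a × b) R) :
    filteredOperator (vecMulVec u (star u)) (vecMulVec v (star v)) ρ =
      (of (Function.curry u) ⊗ₖ (of (Function.curry v))ᵀ) * ρ *
        (of (Function.curry u) ⊗ₖ (of (Function.curry v))ᵀ)ᴴ := by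
  ext p q
  rw [Matrix.mul_assoc]
  simp only [filteredOperator, mul_apply, Finset.mul_sum, of_apply,
    Fintype.sum_prod_type]
  refine Finset.sum_congr rfl fun i _ => Finset.sum_comm.trans ?_
  refine Finset.sum_congr rfl fun j _ => Finset.sum_congr rfl fun i' _ =>
    Finset.sum_congr rfl fun j' _ => ?_
  simp only [vecMulVec_apply, Pi.star_apply, kroneckerMap_apply, conjTranspose_apply,
    transpose_apply, of_apply, Function.curry_apply, star_mul']
  ring

variable [Fintype a₀] [Fintype b₀]

theorem filtered_operator_schmidt_number_le_general {r : ℕ}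
    {ρ : Matrix (a × b) (a × b) ℂ} (hSN : SchmidtNumberLE ρ r)
    {M : Matrix (a₀ × a) (a₀ × a) ℂ} (hM : M.PosSemidef)
    {N : Matrix (b × b₀) (b × b₀) ℂ} (hN : N.PosSemidef) :
    (filteredOperator M N ρ).PosSemidef ∧ SchmidtNumberLE (filteredOperator M N ρ) r := by
  suffices hR : SchmidtNumberLE (filteredOperator M N ρ) r from ⟨hR.posSemidef, hR⟩
  obtain ⟨k, u, rfl⟩ := posSemidef_iff_eq_sum_vecMulVec.mp hM
  obtain ⟨l, v, rfl⟩ := posSemidef_iff_eq_sum_vecMulVec.mp hN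
  simp only [filteredOperator_sum_left, filteredOperator_sum_right,
    filteredOperator_vecMulVec_star]
  exact .sum fun s _ => .sum fun t _ => hSN.kronecker_mul_mul_conjTranspose_s12 _ _

end FilteredOperator

/-- post-measurement (filtered) operator
`R = Tr_{AB}[(M ⊗ N)(ρ ⊗ I_{A₀B₀})]` is positive semidefinite with Schmidt number at
most `r`, whenever `SN(ρ) ≤ r` and `M, N` are effects. -/
theorem filtered_operator_schmidt_number_le (dA dB dA₀ dB₀ r : ℕ)
    (ρ : Matrix (Fin dA × Fin dB) (Fin dA × Fin dB) ℂ)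
    (hρ : ρ.PosSemidef) (hSN : SchmidtNumberLE ρ r)
    (M : Matrix (Fin dA₀ × Fin dA) (Fin dA₀ × Fin dA) ℂ)
    (N : Matrix (Fin dB × Fin dB₀) (Fin dB × Fin dB₀) ℂ)
    (hM : IsEffect M) (hN : IsEffect N) :
    (Matrix.of fun (p q : Fin dA₀ × Fin dB₀) =>
        ∑ i, ∑ i', ∑ j, ∑ j',
          M (p.1, i) (q.1, i') * N (j, p.2) (j', q.2) * ρ (i, j) (i', j')).PosSemidef ∧
    SchmidtNumberLE
      (Matrix.of fun (p q : Fin dA₀ × Fin dB₀) =>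
        ∑ i, ∑ i', ∑ j, ∑ j',
          M (p.1, i) (q.1, i') * N (j, p.2) (j', q.2) * ρ (i, j) (i', j')) r :=
  filtered_operator_schmidt_number_le_general hSN hM.1 hN.1
end

section
/- Every two-outcome POVM is a convex combination of projective measurements: for every positive integer d and every complex d×d matrix E with 0 ≤ E ≤ I (both E and I − E positive semidefinite), there exist a finite family of orthogonal projections P_k (P_k† = P_k = P_k²) and weights p_k ≥ 0 with Σ_k p_k = 1 such that E = Σ_k p_k P_k (and hence I − E = Σ_k p_k (I − P_k)). -/
open Matrix
open scoped Kronecker ComplexOrder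

/-!
A vector with entries in `[0, 1]` is a convex combination of vertices of the cube, that is, of
`0`-`1` vectors, and these are exactly the projections of the star algebra `ι → ℝ`. When the
spectrum of a self-adjoint `a` is finite, the functional calculus is a star homomorphism from all
functions on the spectrum, so it carries such a decomposition of the identity function to a
decomposition of `a`.
-/

theorem convexHull_pi_zero_one_eq_Icc {𝕜 ι : Type*} [Field 𝕜] [LinearOrder 𝕜]
    [IsStrictOrderedRing 𝕜] [Finite ι] :
    convexHull 𝕜 (Set.univ.pi fun _ : ι => ({0, 1} : Set 𝕜)) = Set.Icc 0 1 := by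
  simp only [convexHull_pi, convexHull_pair, segment_eq_Icc zero_le_one]
  exact Set.pi_univ_Icc 0 1

theorem isStarProjection_pi_iff_mem_pi_zero_one {𝕜 ι : Type*} [Semiring 𝕜] [IsCancelMulZero 𝕜]
    [StarRing 𝕜] [TrivialStar 𝕜] {p : ι → 𝕜} :
    IsStarProjection p ↔ p ∈ Set.univ.pi fun _ => ({0, 1} : Set 𝕜) := by
  simp only [isStarProjection_iff, IsSelfAdjoint, star_trivial, and_true, IsIdempotentElem,
    funext_iff, Pi.mul_apply, Set.mem_univ_pi, Set.mem_insert_iff, Set.mem_singleton_iff]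
  exact forall_congr' fun _ => IsIdempotentElem.iff_eq_zero_or_one

theorem starAlgHom_map_mem_convexHull_isStarProjection {𝕜 A B : Type*} [CommSemiring 𝕜]
    [PartialOrder 𝕜] [Semiring A] [Algebra 𝕜 A] [Star A] [Semiring B] [Algebra 𝕜 B] [Star B]
    (φ : A →⋆ₐ[𝕜] B) {a : A} (ha : a ∈ convexHull 𝕜 {p : A | IsStarProjection p}) :
    φ a ∈ convexHull 𝕜 {p : B | IsStarProjection p} := by
  have hmap := Set.mem_image_of_mem φ.toAlgHom.toLinearMap ha
  rw [LinearMap.image_convexHull] at hmap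
  refine convexHull_mono ?_ hmap
  rintro _ ⟨p, hp, rfl⟩
  exact hp.map φ

theorem exists_fin_convex_combination_of_mem_convexHull {𝕜 E : Type*} [Field 𝕜] [LinearOrder 𝕜]
    [IsStrictOrderedRing 𝕜] [AddCommGroup E] [Module 𝕜 E] {s : Set E} {x : E}
    (hx : x ∈ convexHull 𝕜 s) :
    ∃ (k : ℕ) (z : Fin k → E) (w : Fin k → 𝕜),
      (∀ i, z i ∈ s) ∧ (∀ i, 0 ≤ w i) ∧ ∑ i, w i = 1 ∧ x = ∑ i, w i • z i := by
  obtain ⟨ι, _, w, z, hw, hw_sum, hz, hx_sum⟩ := mem_convexHull_iff_exists_fintype.mp hx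
  let e := (Fintype.equivFin ι).symm
  exact ⟨Fintype.card ι, z ∘ e, w ∘ e, fun i => hz (e i), fun i => hw (e i),
    (e.sum_comp w).trans hw_sum, hx_sum.symm.trans (e.sum_comp fun i => w i • z i).symm⟩

/-- The identification of arbitrary functions on a discrete space with continuous ones, as a star
algebra homomorphism; composed with `cfcHom` it evaluates any function on a finite spectrum. -/
def starAlgHomOfDiscrete (R X : Type*) [CommSemiring R] [StarRing R] [TopologicalSpace R]
    [IsTopologicalSemiring R] [ContinuousStar R] [TopologicalSpace X] [DiscreteTopology X] :
    (X → R) →⋆ₐ[R] C(X, R) where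
  toFun f := ⟨f, continuous_of_discreteTopology⟩
  map_one' := rfl
  map_mul' _ _ := rfl
  map_zero' := rfl
  map_add' _ _ := rfl
  commutes' _ := rfl
  map_star' _ := rfl

section FunctionalCalculus

variable {A : Type*} [Ring A] [StarRing A] [Algebra ℝ A] [TopologicalSpace A]
  [ContinuousFunctionalCalculus ℝ A IsSelfAdjoint]

theorem mem_convexHull_isStarProjection_of_spectrum_subset_Icc {a : A} (ha : IsSelfAdjoint a)
    (ha_finite : (spectrum ℝ a).Finite) (ha_spectrum : spectrum ℝ a ⊆ Set.Icc 0 1) :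
    a ∈ convexHull ℝ {p : A | IsStarProjection p} := by
  have := ha_finite.to_subtype
  let φ : (spectrum ℝ a → ℝ) →⋆ₐ[ℝ] A :=
    (cfcHom ha).comp (starAlgHomOfDiscrete ℝ (spectrum ℝ a))
  have hφ : φ Subtype.val = a := cfcHom_id ha
  have hval : (Subtype.val : spectrum ℝ a → ℝ) ∈ convexHull ℝ {p | IsStarProjection p} := by
    simp only [isStarProjection_pi_iff_mem_pi_zero_one, Set.ofPred_mem_eq,
      convexHull_pi_zero_one_eq_Icc]
    exact ⟨fun r => (ha_spectrum r.2).1, fun r => (ha_spectrum r.2).2⟩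
  exact hφ ▸ starAlgHom_map_mem_convexHull_isStarProjection φ hval

theorem dichotomic_povm_convex_combination_of_projectives_general [PartialOrder A]
    [StarOrderedRing A] [NonnegSpectrumClass ℝ A] {a : A} (ha_finite : (spectrum ℝ a).Finite)
    (ha_nonneg : 0 ≤ a) (ha_le_one : a ≤ 1) :
    ∃ (k : ℕ) (P : Fin k → A) (p : Fin k → ℝ),
      (∀ i, IsStarProjection (P i)) ∧ (∀ i, 0 ≤ p i) ∧ ∑ i, p i = 1 ∧ a = ∑ i, p i • P i :=
  exists_fin_convex_combination_of_mem_convexHull <|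
    mem_convexHull_isStarProjection_of_spectrum_subset_Icc (.of_nonneg ha_nonneg) ha_finite
      fun r hr => ⟨spectrum_nonneg_of_nonneg ha_nonneg hr,
        (CFC.le_one_iff a).mp ha_le_one r hr⟩

end FunctionalCalculus

/-- every two-outcome POVM is a convex combination of projective
measurements: every effect `E` (with `0 ≤ E ≤ I`) is a convex combination of orthogonal
projections. -/
theorem dichotomic_povm_convex_combination_of_projectives (d : ℕ) (hd : 0 < d)
    (E : Matrix (Fin d) (Fin d) ℂ) (hE : E.PosSemidef ∧ (1 - E).PosSemidef) :
    ∃ (k : ℕ) (P : Fin k → Matrix (Fin d) (Fin d) ℂ) (p : Fin k → ℝ),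
      (∀ i, (P i)ᴴ = P i ∧ P i * P i = P i) ∧
      (∀ i, 0 ≤ p i) ∧ (∑ i, p i = 1) ∧
      E = ∑ i, (p i : ℂ) • P i := by
  open scoped MatrixOrder in
  obtain ⟨k, P, p, hP, hp, hp_sum, hE_sum⟩ :=
    dichotomic_povm_convex_combination_of_projectives_general E.finite_real_spectrum
      hE.1.nonneg (Matrix.le_iff.mpr hE.2)
  exact ⟨k, P, p, fun i => ⟨(hP i).isSelfAdjoint, (hP i).isIdempotentElem⟩, hp, hp_sum,
    hE_sum⟩
end
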